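/- Let G be a countable infinite discrete group such that for every standard probability space (X₀, μ₀) the Bernoulli shift G ↷ (X₀^G, μ₀^G) is 𝕋-cocycle superrigid (G ∈ 𝒢). Consider the Bernoulli shift G ↷ (𝕋^G, ν^G), where ν is the Haar measure on 𝕋. If the natural map Ψ₂ : H²(G, 𝕋) → H²(G ↷ 𝕋^G; 𝕋) is surjective (i.e., H²(G ↷ 𝕋^G; 𝕋) = H²(G, 𝕋)), then H²(G, ℤG) = 0. -/

import Mathlib

open MeasureTheory

noncomputable section

namespace AlgActCohomology

/-- The Borel σ-algebra on the circle group `𝕋 = {z ∈ ℂ : |z| = 1}`. -/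
noncomputable instance : MeasurableSpace Circle := borel Circle
instance : BorelSpace Circle := ⟨rfl⟩

variable {G X : Type*}

/-- The diagonal action on a product. -/
def diag (a : G → X → X) : G → X × X → X × X := fun g p => (a g p.1, a g p.2)

/-- An action is ergodic if every measurable set invariant under every group element
has measure 0 or 1. -/
def IsErgodicAction [MeasurableSpace X] (a : G → X → X) (μ : Measure X) : Prop :=
  ∀ s : Set X, MeasurableSet s → (∀ g : G, a g ⁻¹' s = s) → μ s = 0 ∨ μ s = 1

/-- An action is weakly mixing if the diagonal action on the square
(with the product measure) is ergodic. -/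
def IsWeaklyMixing [MeasurableSpace X] (a : G → X → X) (μ : Measure X) : Prop :=
  IsErgodicAction (diag a) (μ.prod μ)

/-- A (p.m.p.) group action: `a : G → X → X` is an action of `G` and every `a g`
is measure preserving. -/
structure IsPmpAction [Group G] [MeasurableSpace X] (a : G → X → X) (μ : Measure X) :
    Prop where
  act_one : ∀ x, a 1 x = x
  act_mul : ∀ g h x, a (g * h) x = a g (a h x)
  measurePreserving : ∀ g, MeasurePreserving (a g) μ μ

/-- An algebraic action: an action of `G` by continuous (automatically bijective)
additive automorphisms of a compact abelian group `X`. -/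
structure IsAlgebraicAction [Group G] [AddCommGroup X] [TopologicalSpace X]
    (a : G → X → X) : Prop where
  act_one : ∀ x, a 1 x = x
  act_mul : ∀ g h x, a (g * h) x = a g (a h x)
  continuous : ∀ g, Continuous (a g)
  act_add : ∀ g x y, a g (x + y) = a g x + a g y

/-- A measurable `𝕋`-valued 1-cocycle for an action. -/
def IsCocycle1 [Group G] [MeasurableSpace X] (a : G → X → X) (μ : Measure X)
    (c : G → X → Circle) : Prop :=
  (∀ g, Measurable (c g)) ∧ ∀ g h : G, ∀ᵐ x ∂μ, c (g * h) x = c g x * c h (a g⁻¹ x)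

/-- An action is `𝕋`-cocycle superrigid if every measurable `𝕋`-valued 1-cocycle is
cohomologous to a group homomorphism `G → 𝕋`. -/
def IsCocycleSuperrigid [Group G] [MeasurableSpace X] (a : G → X → X) (μ : Measure X) :
    Prop :=
  ∀ c : G → X → Circle, IsCocycle1 a μ c →
    ∃ (lam : G →* Circle) (b : X → Circle), Measurable b ∧
      ∀ g : G, ∀ᵐ x ∂μ, c g x = lam g * (b (a g⁻¹ x) * (b x)⁻¹)

section Char

variable (X) [AddCommGroup X] [TopologicalSpace X]

/-- The Pontryagin dual `X̂` of a compact abelian group `X`: the group of continuous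
characters `X → 𝕋`, as a subgroup of the group of all functions `X → 𝕋`. -/
def charGroup : Subgroup (X → Circle) where
  carrier := {χ | Continuous χ ∧ ∀ x y, χ (x + y) = χ x * χ y}
  one_mem' := ⟨continuous_const, fun _ _ => (one_mul 1).symm⟩
  mul_mem' := fun h1 h2 => ⟨h1.1.mul h2.1, fun x y => by
    simp only [Pi.mul_apply, h1.2 x y, h2.2 x y]; exact mul_mul_mul_comm _ _ _ _⟩
  inv_mem' := fun h => ⟨h.1.inv, fun x y => by
    simp only [Pi.inv_apply, h.2 x y, mul_inv]⟩

end Char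

section Degree1

variable [Group G] [AddCommGroup X] [TopologicalSpace X]

/-- `Z¹(G, X̂)`: 1-cocycles of `G` with coefficients in the dual module `X̂`,
where `(g • χ) x = χ (a g⁻¹ x)`. -/
def modZ1 (a : G → X → X) : Subgroup (G → charGroup X) where
  carrier := {c | ∀ (g h : G) (x : X),
    ((c (g * h) : X → Circle)) x = (c h : X → Circle) (a g⁻¹ x) * (c g : X → Circle) x}
  one_mem' := by
    intro g h x
    simp
  mul_mem' := by
    intro c₁ c₂ h1 h2 g h x
    simp only [Pi.mul_apply, Subgroup.coe_mul]
    rw [h1 g h x, h2 g h x]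
    ac_rfl
  inv_mem' := by
    intro c hc g h x
    simp only [Pi.inv_apply, InvMemClass.coe_inv]
    rw [hc g h x, mul_inv]

/-- `B¹(G, X̂)`: 1-coboundaries. -/
def modB1 (a : G → X → X) : Subgroup (G → charGroup X) where
  carrier := {c | ∃ χ : charGroup X, ∀ (g : G) (x : X),
    (c g : X → Circle) x = (χ : X → Circle) (a g⁻¹ x) * ((χ : X → Circle) x)⁻¹}
  one_mem' := ⟨1, by intro g x; simp⟩
  mul_mem' := by
    rintro c₁ c₂ ⟨χ₁, h1⟩ ⟨χ₂, h2⟩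
    refine ⟨χ₁ * χ₂, fun g x => ?_⟩
    simp only [Pi.mul_apply, Subgroup.coe_mul]
    rw [h1 g x, h2 g x, mul_inv]
    ac_rfl
  inv_mem' := by
    rintro c ⟨χ, h⟩
    refine ⟨χ⁻¹, fun g x => ?_⟩
    simp only [Pi.inv_apply, InvMemClass.coe_inv]
    rw [h g x, mul_inv, inv_inv]

variable [MeasurableSpace X]

/-- Measurable `𝕋`-valued 1-cocycles for an action, as a subgroup of all maps
`G → X → 𝕋`. -/
def measZ1 (a : G → X → X) (μ : Measure X) : Subgroup (G → X → Circle) where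
  carrier := {c | (∀ g, Measurable (c g)) ∧
    ∀ g h : G, ∀ᵐ x ∂μ, c (g * h) x = c g x * c h (a g⁻¹ x)}
  one_mem' := ⟨fun _ => measurable_const, fun g h => ae_of_all _ fun x => by simp⟩
  mul_mem' := by
    rintro c₁ c₂ ⟨m1, h1⟩ ⟨m2, h2⟩
    refine ⟨fun g => (m1 g).mul (m2 g), fun g h => ?_⟩
    filter_upwards [h1 g h, h2 g h] with x e1 e2
    simp only [Pi.mul_apply]
    rw [e1, e2]
    ac_rfl
  inv_mem' := by
    rintro c ⟨m, hc⟩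
    refine ⟨fun g => (m g).inv, fun g h => ?_⟩
    filter_upwards [hc g h] with x e
    simp only [Pi.inv_apply]
    rw [e, mul_inv]

/-- The subgroup of measurable 1-cocycles that are cohomologous to (the cocycle
induced by) a group homomorphism `G → 𝕋`; this is the preimage in `Z¹(G ↷ X; 𝕋)` of
the subgroup `Ψ₁(H¹(G, 𝕋))` of `H¹(G ↷ X; 𝕋)`, so that
`H¹(G ↷ X; 𝕋)/Ψ₁(H¹(G, 𝕋)) = measZ1 ⧸ measBPsi1`. -/
def measBPsi1 (a : G → X → X) (μ : Measure X) : Subgroup (G → X → Circle) where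
  carrier := {c | ∃ (φ : G →* Circle) (b : X → Circle), Measurable b ∧
    ∀ g : G, ∀ᵐ x ∂μ, c g x = φ g * (b (a g⁻¹ x) * (b x)⁻¹)}
  one_mem' := ⟨1, 1, measurable_const, fun g => ae_of_all _ fun x => by simp⟩
  mul_mem' := by
    rintro c₁ c₂ ⟨φ₁, b₁, hb₁, h1⟩ ⟨φ₂, b₂, hb₂, h2⟩
    refine ⟨φ₁ * φ₂, b₁ * b₂, hb₁.mul hb₂, fun g => ?_⟩
    filter_upwards [h1 g, h2 g] with x e1 e2
    simp only [Pi.mul_apply, MonoidHom.mul_apply]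
    rw [e1, e2, mul_inv]
    ac_rfl
  inv_mem' := by
    rintro c ⟨φ, b, hb, h⟩
    refine ⟨φ⁻¹, b⁻¹, hb.inv, fun g => ?_⟩
    filter_upwards [h g] with x e
    simp only [Pi.inv_apply, MonoidHom.inv_apply]
    rw [e, mul_inv, mul_inv, inv_inv]

/-- The measurable cocycle induced by a module cocycle: evaluation of characters. -/
def ind1 (c : G → charGroup X) : G → X → Circle := fun g => (c g : X → Circle)

end Degree1

section Degree2

variable [Group G]

/-- A `𝕋`-valued 2-cocycle of the group `G` (for the trivial `G`-module `𝕋`). -/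
def IsGrpCocycle2 (θ : G → G → Circle) : Prop :=
  ∀ g₁ g₂ g₃ : G, θ g₂ g₃ * (θ (g₁ * g₂) g₃)⁻¹ * θ g₁ (g₂ * g₃) * (θ g₁ g₂)⁻¹ = 1

private lemma mul4 {M : Type*} [CommGroup M] {a₁ b₁ c₁ d₁ a₂ b₂ c₂ d₂ : M}
    (h₁ : a₁ * b₁⁻¹ * c₁ * d₁⁻¹ = 1) (h₂ : a₂ * b₂⁻¹ * c₂ * d₂⁻¹ = 1) :
    (a₁ * a₂) * (b₁ * b₂)⁻¹ * (c₁ * c₂) * (d₁ * d₂)⁻¹ = 1 := by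
  have e : (a₁ * a₂) * (b₁ * b₂)⁻¹ * (c₁ * c₂) * (d₁ * d₂)⁻¹
      = (a₁ * b₁⁻¹ * c₁ * d₁⁻¹) * (a₂ * b₂⁻¹ * c₂ * d₂⁻¹) := by
    simp only [mul_inv]; ac_rfl
  rw [e, h₁, h₂, one_mul]

private lemma inv4 {M : Type*} [CommGroup M] {a b c d : M}
    (h : a * b⁻¹ * c * d⁻¹ = 1) : a⁻¹ * b * c⁻¹ * d = 1 := by
  have e : a⁻¹ * b * c⁻¹ * d = (a * b⁻¹ * c * d⁻¹)⁻¹ := by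
    simp only [mul_inv, inv_inv]; try ac_rfl
  rw [e, h, inv_one]

variable [AddCommGroup X] [TopologicalSpace X]

/-- `Z²(G, X̂)`: 2-cocycles of `G` with coefficients in the dual module `X̂`. -/
def modZ2 (a : G → X → X) : Subgroup (G → G → charGroup X) where
  carrier := {c | ∀ (g₁ g₂ g₃ : G) (x : X),
    (c g₂ g₃ : X → Circle) (a g₁⁻¹ x) * ((c (g₁ * g₂) g₃ : X → Circle) x)⁻¹ *
      (c g₁ (g₂ * g₃) : X → Circle) x * ((c g₁ g₂ : X → Circle) x)⁻¹ = 1}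
  one_mem' := by intro g₁ g₂ g₃ x; simp
  mul_mem' := by
    intro c₁ c₂ h1 h2 g₁ g₂ g₃ x
    simp only [Pi.mul_apply, Subgroup.coe_mul]
    exact mul4 (h1 g₁ g₂ g₃ x) (h2 g₁ g₂ g₃ x)
  inv_mem' := by
    intro c hc g₁ g₂ g₃ x
    simp only [Pi.inv_apply, InvMemClass.coe_inv, inv_inv]
    exact inv4 (hc g₁ g₂ g₃ x)

/-- `B²(G, X̂)`: 2-coboundaries. -/
def modB2 (a : G → X → X) : Subgroup (G → G → charGroup X) where
  carrier := {c | ∃ b : G → charGroup X, ∀ (g h : G) (x : X),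
    (c g h : X → Circle) x =
      (b h : X → Circle) (a g⁻¹ x) * ((b (g * h) : X → Circle) x)⁻¹ * (b g : X → Circle) x}
  one_mem' := ⟨1, by intro g h x; simp⟩
  mul_mem' := by
    rintro c₁ c₂ ⟨b₁, h1⟩ ⟨b₂, h2⟩
    refine ⟨b₁ * b₂, fun g h x => ?_⟩
    simp only [Pi.mul_apply, Subgroup.coe_mul]
    rw [h1 g h x, h2 g h x, mul_inv]
    try ac_rfl
  inv_mem' := by
    rintro c ⟨b, hb⟩
    refine ⟨b⁻¹, fun g h x => ?_⟩
    simp only [Pi.inv_apply, InvMemClass.coe_inv]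
    rw [hb g h x]
    simp only [mul_inv, inv_inv]
    try ac_rfl

variable [MeasurableSpace X]

/-- Measurable `𝕋`-valued 2-cocycles for an action. -/
def measZ2 (a : G → X → X) (μ : Measure X) : Subgroup (G → G → X → Circle) where
  carrier := {c | (∀ g h, Measurable (c g h)) ∧
    ∀ g₁ g₂ g₃ : G, ∀ᵐ x ∂μ,
      c g₂ g₃ (a g₁⁻¹ x) * (c (g₁ * g₂) g₃ x)⁻¹ * c g₁ (g₂ * g₃) x * (c g₁ g₂ x)⁻¹ = 1}
  one_mem' := ⟨fun _ _ => measurable_const, fun g₁ g₂ g₃ => ae_of_all _ fun x => by simp⟩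
  mul_mem' := by
    rintro c₁ c₂ ⟨m1, h1⟩ ⟨m2, h2⟩
    refine ⟨fun g h => (m1 g h).mul (m2 g h), fun g₁ g₂ g₃ => ?_⟩
    filter_upwards [h1 g₁ g₂ g₃, h2 g₁ g₂ g₃] with x e1 e2
    simp only [Pi.mul_apply]
    exact mul4 e1 e2
  inv_mem' := by
    rintro c ⟨m, hc⟩
    refine ⟨fun g h => (m g h).inv, fun g₁ g₂ g₃ => ?_⟩
    filter_upwards [hc g₁ g₂ g₃] with x e
    simp only [Pi.inv_apply, inv_inv]
    exact inv4 e

/-- The subgroup of measurable 2-cocycles that are cohomologous to a constant (in the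
space variable) 2-cocycle coming from a group 2-cocycle `θ : G² → 𝕋`; this is the
preimage in `Z²(G ↷ X; 𝕋)` of the subgroup `Ψ₂(H²(G, 𝕋))` of `H²(G ↷ X; 𝕋)`, so that
`H²(G ↷ X; 𝕋)/Ψ₂(H²(G, 𝕋)) = measZ2 ⧸ measBPsi2`. -/
def measBPsi2 (a : G → X → X) (μ : Measure X) : Subgroup (G → G → X → Circle) where
  carrier := {c | ∃ (θ : G → G → Circle) (b : G → X → Circle), IsGrpCocycle2 θ ∧
    (∀ g, Measurable (b g)) ∧
    ∀ g h : G, ∀ᵐ x ∂μ, c g h x = θ g h * (b h (a g⁻¹ x) * (b (g * h) x)⁻¹ * b g x)}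
  one_mem' := ⟨fun _ _ => 1, fun _ => 1, fun g₁ g₂ g₃ => by simp, fun _ => measurable_const,
    fun g h => ae_of_all _ fun x => by simp⟩
  mul_mem' := by
    rintro c₁ c₂ ⟨θ₁, b₁, hθ₁, hb₁, h1⟩ ⟨θ₂, b₂, hθ₂, hb₂, h2⟩
    refine ⟨fun g h => θ₁ g h * θ₂ g h, fun g => b₁ g * b₂ g,
      fun g₁ g₂ g₃ => mul4 (hθ₁ g₁ g₂ g₃) (hθ₂ g₁ g₂ g₃),
      fun g => (hb₁ g).mul (hb₂ g), fun g h => ?_⟩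
    filter_upwards [h1 g h, h2 g h] with x e1 e2
    simp only [Pi.mul_apply]
    rw [e1, e2]
    simp only [mul_inv]
    ac_rfl
  inv_mem' := by
    rintro c ⟨θ, b, hθ, hb, hc⟩
    refine ⟨fun g h => (θ g h)⁻¹, fun g => (b g)⁻¹,
      fun g₁ g₂ g₃ => by simpa only [inv_inv] using inv4 (hθ g₁ g₂ g₃),
      fun g => (hb g).inv, fun g h => ?_⟩
    filter_upwards [hc g h] with x e
    simp only [Pi.inv_apply]
    rw [e]
    simp only [mul_inv, inv_inv]
    try ac_rfl

/-- The measurable 2-cocycle induced by a module 2-cocycle: evaluation of characters. -/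
def ind2 (c : G → G → charGroup X) : G → G → X → Circle := fun g h => (c g h : X → Circle)

end Degree2


section Bernoulli

/-- The Bernoulli shift action `G ↷ X₀^G`, `(g • x) h = x (g⁻¹ h)`. -/
def bernoulliShift (G X₀ : Type*) [Group G] : G → (G → X₀) → (G → X₀) :=
  fun g x h => x (g⁻¹ * h)

/-- `μ` is the product along `ι` of copies of `μ₀`: it gives every finite-dimensional
cylinder set its product measure.  (This characterizes the Bernoulli product measure
`μ₀^ι` uniquely.) -/
def IsBernoulliMeasure {ι X₀ : Type*} [MeasurableSpace X₀] (μ₀ : Measure X₀)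
    (μ : Measure (ι → X₀)) : Prop :=
  ∀ (s : Finset ι) (t : ι → Set X₀), (∀ i, MeasurableSet (t i)) →
    μ {x | ∀ i ∈ s, x i ∈ t i} = ∏ i ∈ s, μ₀ (t i)

/-- The class `𝒢` of countable groups `G` such that for every standard probability
space `(X₀, μ₀)` the Bernoulli shift `G ↷ (X₀^G, μ₀^G)` is `𝕋`-cocycle superrigid. -/
def InClassG (G : Type*) [Group G] : Prop :=
  ∀ (X₀ : Type) [MeasurableSpace X₀] [StandardBorelSpace X₀]
    (μ₀ : Measure X₀) [IsProbabilityMeasure μ₀]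
    (μ : Measure (G → X₀)) [IsProbabilityMeasure μ],
    IsBernoulliMeasure μ₀ μ → IsCocycleSuperrigid (bernoulliShift G X₀) μ

end Bernoulli

/-! A 2-cocycle `c` with values in `ℤ[G]` gives characters `χ_{c(g, h)}` of the torus `𝕋^G`, that
is, a 2-cocycle of the Bernoulli shift, and surjectivity of `Ψ₂` writes it as `θ(g, h)` times the
coboundary of some `b_g : 𝕋^G → 𝕋`.

The operator `Δf(x, y, r) = f(xy) f(xr) / (f(x) f(xyr))` kills constants and characters, so
`g ↦ Δb_g` is a 1-cocycle of the diagonal action on `(𝕋^G)³`, which is again a Bernoulli shift. By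
superrigidity `Δb_g = l(g) · (W ∘ g⁻¹) / W`. The functions measuring how far `W` is from being
additive in the base point and symmetric in `y`, `r` are eigenfunctions of the shift, hence
constant. For almost every `x`, this makes `W(x, ·, ·)`, up to a constant, a symmetric 2-cocycle
of the group `𝕋^G`; it is a coboundary because the translations twisted by it commute and have a
common eigenvector in `L²(𝕋^G)`. Hence `W` is a constant times `Δv`, and `l = 1`.

Replacing `b_g` by `b_g v / (v ∘ g⁻¹)` now achieves `Δb_g = 1`, which forces `b_g` to be a
constant times a character `χ_{n(g)}`. Comparing characters gives `c = ∂n`. -/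

section Haar

theorem measurePreserving_of_hom {A B : Type*} [Group A] [TopologicalSpace A]
    [IsTopologicalGroup A] [CompactSpace A] [MeasurableSpace A] [BorelSpace A]
    [Group B] [TopologicalSpace B] [IsTopologicalGroup B]
    [CompactSpace B] [MeasurableSpace B] [BorelSpace B] [SecondCountableTopology B]
    (α : Measure A) [IsProbabilityMeasure α] [α.IsHaarMeasure]
    (β : Measure B) [IsProbabilityMeasure β] [β.IsHaarMeasure]
    (f : A → B) (hsurj : f.Surjective)
    (hmul : ∀ x y, f (x * y) = f x * f y := by intros; ext <;> simp [mul_mul_mul_comm])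
    (hf : Continuous f := by fun_prop) : MeasurePreserving f α β :=
  (MonoidHom.mk' f hmul).measurePreserving hf hsurj (by simp)

end Haar

namespace IsBernoulliMeasure

variable {ι K : Type*} [MeasurableSpace K] {κ : Measure K} [IsProbabilityMeasure κ]
  {μ : Measure (ι → K)}

theorem eq_infinitePi (hμ : IsBernoulliMeasure κ μ) : μ = Measure.infinitePi fun _ ↦ κ :=
  Measure.eq_infinitePi _ hμ

theorem isHaarMeasure [Countable ι] [Group K] [TopologicalSpace K] [IsTopologicalGroup K]
    [CompactSpace K] [SecondCountableTopology K] [BorelSpace K] [κ.IsMulLeftInvariant]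
    (hμ : IsBernoulliMeasure κ μ) : μ.IsHaarMeasure := by
  rw [hμ.eq_infinitePi]
  have : (Measure.infinitePi fun _ : ι ↦ κ).IsMulLeftInvariant := by
    refine ⟨fun g ↦ (Measure.infinitePi_map_pi _ fun i ↦ measurable_const_mul (g i)).trans ?_⟩
    simp only [map_mul_left_eq_self]
  exact Measure.isHaarMeasure_of_isCompact_nonempty_interior _ Set.univ isCompact_univ
    (by simp) (by simp) (by simp)

end IsBernoulliMeasure

theorem memLp_coe_circle [MeasurableSpace X] {μ : Measure X} [IsFiniteMeasure μ]
    {f : X → Circle} (hf : Measurable f) (p : ENNReal) : MemLp (fun x ↦ (f x : ℂ)) p μ :=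
  .of_bound (C := 1) (by fun_prop) (.of_forall fun _ ↦ (Circle.norm_coe _).le)

theorem integrable_coe_circle [MeasurableSpace X] {μ : Measure X} [IsFiniteMeasure μ]
    {f : X → Circle} (hf : Measurable f) : Integrable (fun x ↦ (f x : ℂ)) μ :=
  memLp_one_iff_integrable.1 (memLp_coe_circle hf 1)

section TorusChar

variable {ι κ : Type*}

/-- The continuous character `x ↦ ∏ᵢ xᵢ ^ nᵢ` of the torus `𝕋^ι`. -/
def torusChar (n : ι →₀ ℤ) : (ι → Circle) →ₜ* Circle where
  toFun x := n.prod fun i k ↦ x i ^ k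
  map_one' := by simp
  map_mul' x y := by simp [mul_zpow, Finsupp.prod_mul]
  continuous_toFun := continuous_finsetProd _ fun i _ ↦ (continuous_apply i).zpow _

theorem torusChar_apply (n : ι →₀ ℤ) (x : ι → Circle) :
    torusChar n x = n.prod fun i k ↦ x i ^ k := rfl

@[simp]
theorem torusChar_zero (x : ι → Circle) : torusChar 0 x = 1 := by
  simp [torusChar_apply]

theorem torusChar_add (m n : ι →₀ ℤ) (x : ι → Circle) :
    torusChar (m + n) x = torusChar m x * torusChar n x := by
  classical exact Finsupp.prod_add_index' (fun _ ↦ zpow_zero _) (fun _ ↦ zpow_add _)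

theorem torusChar_neg (n : ι →₀ ℤ) (x : ι → Circle) : torusChar (-n) x = (torusChar n x)⁻¹ := by
  rw [eq_inv_iff_mul_eq_one, ← torusChar_add, neg_add_cancel, torusChar_zero]

theorem torusChar_sub (m n : ι →₀ ℤ) (x : ι → Circle) :
    torusChar (m - n) x = torusChar m x / torusChar n x := by
  rw [sub_eq_add_neg, torusChar_add, torusChar_neg, div_eq_mul_inv]

@[simp]
theorem torusChar_single (i : ι) (x : ι → Circle) : torusChar (.single i 1) x = x i := by
  simp [torusChar_apply]

theorem torusChar_mapDomain (f : ι → κ) (n : ι →₀ ℤ) (x : κ → Circle) :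
    torusChar (n.mapDomain f) x = torusChar n (x ∘ f) :=
  Finsupp.prod_mapDomain_index (fun _ ↦ zpow_zero _) (fun _ ↦ zpow_add _)

theorem exists_torusChar_ne_one {n : ι →₀ ℤ} (hn : n ≠ 0) : ∃ x, torusChar n x ≠ 1 := by
  classical
  obtain ⟨i, hi⟩ := Finsupp.ne_iff.1 hn
  have hi : (n i : ℝ) ≠ 0 := by exact_mod_cast hi
  refine ⟨Function.update 1 i (Circle.exp (Real.pi / n i)), ?_⟩
  rw [torusChar_apply, Finsupp.prod_eq_single i
    (fun j _ hj ↦ by simp [Function.update_of_ne hj]) (fun _ ↦ zpow_zero _), Function.update_self,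
    ← Circle.exp_zsmul, zsmul_eq_mul, mul_div_cancel₀ _ hi]
  exact Circle.exp_pi_ne_one

theorem eq_of_ae_torusChar_eq_const_mul {μ : Measure (ι → Circle)}
    [μ.IsOpenPosMeasure] {c : Circle} {m n : ι →₀ ℤ}
    (h : ∀ᵐ x ∂μ, torusChar m x = c * torusChar n x) : m = n := by
  have h' : (torusChar m : (ι → Circle) → Circle) = fun x ↦ c * torusChar n x :=
    Continuous.ae_eq_iff_eq μ (by fun_prop) (by fun_prop) |>.1 h
  obtain rfl : c = 1 := by simpa using (congrFun h' 1).symm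
  by_contra hmn
  obtain ⟨x, hx⟩ := exists_torusChar_ne_one (sub_ne_zero.2 hmn)
  exact hx (by simp [torusChar_sub, h'])

theorem integral_torusChar (μ : Measure (ι → Circle)) [μ.IsMulLeftInvariant] {n : ι →₀ ℤ}
    (hn : n ≠ 0) : ∫ x, (torusChar n x : ℂ) ∂μ = 0 := by
  obtain ⟨t, ht⟩ := exists_torusChar_ne_one hn
  have h := integral_mul_left_eq_self (μ := μ) (fun x ↦ (torusChar n x : ℂ)) t
  simp only [map_mul, Circle.coe_mul, integral_const_mul] at h
  exact eq_zero_of_mul_eq_self_left (Circle.coe_eq_one.not.2 ht) h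

/-- The character `torusChar n` as a continuous complex-valued function. -/
@[simps]
def torusCharC (n : ι →₀ ℤ) : C(ι → Circle, ℂ) :=
  ⟨fun x ↦ (torusChar n x : ℂ), by fun_prop⟩

/-- The star subalgebra of trigonometric polynomials on the torus `𝕋^ι`. -/
def torusCharSubalgebra (ι : Type*) : StarSubalgebra ℂ C(ι → Circle, ℂ) where
  toSubalgebra := Algebra.adjoin ℂ (Set.range torusCharC)
  star_mem' := by
    change Algebra.adjoin ℂ _ ≤ star (Algebra.adjoin ℂ _)
    refine Algebra.adjoin_le ?_
    rintro - ⟨n, rfl⟩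
    refine Algebra.subset_adjoin ⟨-n, ?_⟩
    ext x
    simp [torusChar_neg, ← Circle.coe_inv_eq_conj]

theorem torusCharSubalgebra_coe :
    Subalgebra.toSubmodule (torusCharSubalgebra ι).toSubalgebra
      = Submodule.span ℂ (Set.range torusCharC) := by
  refine Algebra.adjoin_eq_span_of_subset _ (.trans (fun f hf ↦ ?_) Submodule.subset_span)
  refine Submonoid.closure_induction (fun _ ↦ id) ⟨0, ?_⟩ ?_ hf
  · ext x
    simp
  · rintro - - - - ⟨m, rfl⟩ ⟨n, rfl⟩
    refine ⟨m + n, ?_⟩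
    ext x
    simp [torusChar_add]

theorem span_torusCharC_closure_eq_top :
    (Submodule.span ℂ (Set.range (torusCharC (ι := ι)))).topologicalClosure = ⊤ := by
  rw [← torusCharSubalgebra_coe]
  refine congrArg
    (fun A : StarSubalgebra ℂ C(ι → Circle, ℂ) ↦ Subalgebra.toSubmodule A.toSubalgebra)
    (ContinuousMap.starSubalgebra_topologicalClosure_eq_top_of_separatesPoints
      (torusCharSubalgebra ι) fun x y hxy ↦ ?_)
  obtain ⟨i, hi⟩ := Function.ne_iff.1 hxy
  refine ⟨_, ⟨torusCharC (.single i 1), Algebra.subset_adjoin ⟨_, rfl⟩, rfl⟩, ?_⟩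
  simpa [Circle.ext_iff] using hi

end TorusChar

section TorusBasis

variable {ι : Type*} [Countable ι] (μ : Measure (ι → Circle)) [IsProbabilityMeasure μ]

/-- The character `torusChar n` as an element of `L²(𝕋^ι)`. -/
def torusCharLp (n : ι →₀ ℤ) : Lp ℂ 2 μ := ContinuousMap.toLp 2 μ ℂ (torusCharC n)

theorem coeFn_torusCharLp (n : ι →₀ ℤ) : torusCharLp μ n =ᵐ[μ] fun x ↦ (torusChar n x : ℂ) :=
  ContinuousMap.coeFn_toLp μ (torusCharC n)

variable [μ.IsHaarMeasure]

theorem orthonormal_torusCharLp : Orthonormal ℂ (torusCharLp μ) := by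
  classical
  rw [orthonormal_iff_ite]
  intro m n
  have : inner ℂ (torusCharLp μ m) (torusCharLp μ n) = ∫ x, (torusChar (n - m) x : ℂ) ∂μ := by
    rw [torusCharLp, torusCharLp, ContinuousMap.inner_toLp]
    simp [torusChar_sub, div_eq_mul_inv, ← Circle.coe_inv_eq_conj]
  rw [this]
  split_ifs with h
  · simp [h]
  · exact integral_torusChar μ (sub_ne_zero.2 (Ne.symm h))

theorem span_torusCharLp_closure_eq_top :
    (Submodule.span ℂ (Set.range (torusCharLp μ))).topologicalClosure = ⊤ := by
  convert! DenseRange.topologicalClosure_map_submodule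
    (ContinuousMap.toLp_denseRange ℂ μ ℂ ENNReal.ofNat_ne_top)
    (span_torusCharC_closure_eq_top (ι := ι))
  rw [Submodule.map_span, ← Set.range_comp]
  rfl

/-- The characters form a Hilbert basis of `L²(𝕋^ι)`. -/
def torusBasis : HilbertBasis (ι →₀ ℤ) ℂ (Lp ℂ 2 μ) :=
  HilbertBasis.mk (orthonormal_torusCharLp μ) (span_torusCharLp_closure_eq_top μ).ge

@[simp]
theorem coe_torusBasis : ⇑(torusBasis μ) = torusCharLp μ := HilbertBasis.coe_mk _ _

end TorusBasis

section Eigenfunctions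

theorem infinite_range_mapDomain_smul {ι M : Type*} [Group G] [MulAction G ι] [AddCommMonoid M]
    (hι : ∀ i : ι, (MulAction.orbit G i).Infinite) {n : ι →₀ M} (hn : n ≠ 0) :
    (Set.range fun g : G ↦ n.mapDomain (g • ·)).Infinite := by
  obtain ⟨i, hi⟩ := Finsupp.ne_iff.1 hn
  refine fun hfin ↦ hι i ((hfin.biUnion fun m _ ↦ m.hasFiniteSupport).subset ?_)
  rintro _ ⟨g, rfl⟩
  refine Set.mem_biUnion ⟨g, rfl⟩ ?_
  simpa [Finsupp.mapDomain_apply (MulAction.injective g)] using hi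

theorem measurePreserving_comp_smul {ι K : Type*} [Group G] [MulAction G ι] [Countable ι]
    [Group K] [TopologicalSpace K] [IsTopologicalGroup K] [CompactSpace K]
    [SecondCountableTopology K] [MeasurableSpace K] [BorelSpace K]
    (μ : Measure (ι → K)) [IsProbabilityMeasure μ] [μ.IsHaarMeasure] (g : G) :
    MeasurePreserving (fun (x : ι → K) i ↦ x (g • i)) μ μ :=
  measurePreserving_of_hom μ μ _ (fun x ↦ ⟨fun i ↦ x (g⁻¹ • i), by simp⟩)

variable {ι : Type*} [Countable ι] [Group G] [MulAction G ι]
  (μ : Measure (ι → Circle)) [IsProbabilityMeasure μ] [μ.IsHaarMeasure]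

/-- The Koopman isometry of `L²(𝕋^ι)` induced by the permutation `i ↦ g • i` of the coordinates. -/
def torusShift (g : G) : Lp ℂ 2 μ →ₗᵢ[ℂ] Lp ℂ 2 μ :=
  Lp.compMeasurePreservingₗᵢ ℂ _ (measurePreserving_comp_smul μ g)

theorem coeFn_torusShift (g : G) (f : Lp ℂ 2 μ) :
    torusShift μ g f =ᵐ[μ] fun x ↦ f fun i ↦ x (g • i) :=
  Lp.coeFn_compMeasurePreserving f (measurePreserving_comp_smul μ g)

theorem torusShift_torusCharLp (g : G) (n : ι →₀ ℤ) :
    torusShift μ g (torusCharLp μ n) = torusCharLp μ (n.mapDomain (g • ·)) := by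
  refine Lp.ext ?_
  filter_upwards [coeFn_torusShift μ g (torusCharLp μ n),
    (measurePreserving_comp_smul μ g).quasiMeasurePreserving.ae (coeFn_torusCharLp μ n),
    coeFn_torusCharLp μ (n.mapDomain (g • ·))] with x h₁ h₂ h₃
  rw [h₁, h₂, h₃, torusChar_mapDomain]
  rfl

theorem eq_smul_of_torusShift_eq_smul (hι : ∀ i : ι, (MulAction.orbit G i).Infinite)
    {w : Lp ℂ 2 μ} {l : G → Circle} (h : ∀ g, torusShift μ g w = (l g : ℂ) • w) :
    ∃ c : ℂ, w = c • torusCharLp μ 0 := by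
  have hcoeff (g : G) (n) : ‖(inner ℂ (torusCharLp μ (n.mapDomain (g • ·))) w : ℂ)‖ =
      ‖(inner ℂ (torusCharLp μ n) w : ℂ)‖ := by
    rw [← (torusShift μ g).inner_map_map (torusCharLp μ n), h, torusShift_torusCharLp,
      inner_smul_right, norm_mul, Circle.norm_coe, one_mul]
  -- The squared coefficients are summable and constant along the infinite orbit of `n`.
  have hzero (n) (hn : n ≠ 0) : inner ℂ (torusCharLp μ n) w = 0 := by
    by_contra hne
    have hlim := ((orthonormal_torusCharLp μ).inner_products_summable w).tendsto_cofinite_zero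
    refine infinite_range_mapDomain_smul hι hn (.subset
      (hlim.eventually_ne (pow_ne_zero 2 (norm_ne_zero_iff.2 hne)).symm) ?_)
    rintro _ ⟨g, rfl⟩
    simp [hcoeff]
  refine ⟨(torusBasis μ).repr w 0, ((torusBasis μ).hasSum_repr w).unique ?_⟩
  rw [← coe_torusBasis]
  refine hasSum_single 0 fun n hn ↦ ?_
  rw [(torusBasis μ).repr_apply_apply, coe_torusBasis, hzero n hn, zero_smul]

theorem ae_eq_const_of_comp_smul_eq_mul (hι : ∀ i : ι, (MulAction.orbit G i).Infinite)
    {W : (ι → Circle) → Circle} (hW : Measurable W) {l : G → Circle}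
    (h : ∀ g, ∀ᵐ x ∂μ, W (fun i ↦ x (g • i)) = l g * W x) :
    ∃ c : Circle, ∀ᵐ x ∂μ, W x = c := by
  let w : Lp ℂ 2 μ := (memLp_coe_circle hW 2).toLp _
  have hw : w =ᵐ[μ] fun x ↦ (W x : ℂ) := (memLp_coe_circle hW 2).coeFn_toLp
  obtain ⟨c, hc⟩ := eq_smul_of_torusShift_eq_smul μ hι (w := w) (l := l) fun g ↦ Lp.ext <| by
    filter_upwards [coeFn_torusShift μ g w,
      (measurePreserving_comp_smul μ g).quasiMeasurePreserving.ae hw, hw, h g,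
      Lp.coeFn_smul (l g : ℂ) w] with x h₁ h₂ h₃ h₄ h₅
    simp [h₁, h₂, h₃, h₄, h₅]
  have hWc : ∀ᵐ x ∂μ, (W x : ℂ) = c := by
    filter_upwards [hw, Lp.coeFn_smul c (torusCharLp μ 0), coeFn_torusCharLp μ 0] with x h₁ h₂ h₃
    rw [← h₁, hc, h₂]
    simp [h₃]
  obtain ⟨x₀, hx₀⟩ := hWc.exists
  exact ⟨W x₀, hWc.mono fun x hx ↦ Circle.ext (hx.trans hx₀.symm)⟩

end Eigenfunctions

section Affine

theorem ae_eq_const_of_mul_eq_mul [CommGroup X] [TopologicalSpace X] [IsTopologicalGroup X]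
    [MeasurableSpace X] [BorelSpace X] [SecondCountableTopology X]
    {μ : Measure X} [IsProbabilityMeasure μ] [μ.IsMulLeftInvariant] {f : X → Circle}
    (hf₀ : ∫ x, (f x : ℂ) ∂μ ≠ 0)
    (h : ∀ᵐ x ∂μ, ∀ᵐ y ∂μ, ∀ᵐ r ∂μ, f (x * y) * f (x * r) = f x * f (x * y * r)) :
    ∃ c, ∀ᵐ x ∂μ, f x = c := by
  have hx : ∀ᵐ x ∂μ, (f x : ℂ) = ∫ y, (f y : ℂ) ∂μ := by
    filter_upwards [h] with x hx
    have hy : ∀ᵐ y ∂μ, (f (x * y) : ℂ) = f x := by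
      filter_upwards [hx] with y hy
      have hint : ∫ r, (f (x * y) : ℂ) * f (x * r) ∂μ = ∫ r, (f x : ℂ) * f (x * y * r) ∂μ :=
        integral_congr_ae (hy.mono fun r hr ↦ congrArg ((↑) : Circle → ℂ) hr)
      simp only [integral_const_mul] at hint
      rw [integral_mul_left_eq_self (fun y ↦ (f y : ℂ)) x,
        integral_mul_left_eq_self (fun y ↦ (f y : ℂ)) (x * y)] at hint
      exact mul_right_cancel₀ hf₀ hint
    rw [← integral_mul_left_eq_self (fun y ↦ (f y : ℂ)) x, integral_congr_ae hy]
    simp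
  obtain ⟨x₀, hx₀⟩ := hx.exists
  exact ⟨f x₀, hx.mono fun x hx ↦ Circle.ext (hx.trans hx₀.symm)⟩

variable {ι : Type*} [Countable ι] (μ : Measure (ι → Circle)) [IsProbabilityMeasure μ]
  [μ.IsHaarMeasure]

theorem exists_integral_mul_torusChar_ne_zero {f : (ι → Circle) → Circle} (hf : Measurable f) :
    ∃ n, ∫ x, (f x : ℂ) * torusChar n x ∂μ ≠ 0 := by
  let w : Lp ℂ 2 μ := (memLp_coe_circle hf 2).toLp _
  have hw : w =ᵐ[μ] fun x ↦ (f x : ℂ) := (memLp_coe_circle hf 2).coeFn_toLp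
  by_contra! hzero
  have hinner (n) : inner ℂ (torusCharLp μ n) w = 0 := by
    rw [L2.inner_def, ← hzero (-n)]
    refine integral_congr_ae ?_
    filter_upwards [hw, coeFn_torusCharLp μ n] with x h₁ h₂
    simp [h₁, h₂, torusChar_neg, ← Circle.coe_inv_eq_conj]
  have hw₀ : w = 0 := (torusBasis μ).repr.injective <| by
    ext n
    simp [(torusBasis μ).repr_apply_apply, hinner]
  obtain ⟨x, hx, hx'⟩ := (hw.and (Lp.eq_zero_iff_ae_eq_zero.1 hw₀)).exists
  exact Circle.coe_ne_zero (f x) (hx.symm.trans hx')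

theorem ae_eq_const_mul_torusChar {f : (ι → Circle) → Circle} (hf : Measurable f)
    (h : ∀ᵐ x ∂μ, ∀ᵐ y ∂μ, ∀ᵐ r ∂μ, f (x * y) * f (x * r) = f x * f (x * y * r)) :
    ∃ (c : Circle) (n : ι →₀ ℤ), ∀ᵐ x ∂μ, f x = c * torusChar n x := by
  obtain ⟨n, hn⟩ := exists_integral_mul_torusChar_ne_zero μ hf
  obtain ⟨c, hc⟩ := ae_eq_const_of_mul_eq_mul (μ := μ) (f := fun x ↦ f x * torusChar n x)
    (by simpa using hn) (by
      filter_upwards [h] with x hx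
      filter_upwards [hx] with y hy
      filter_upwards [hy] with r hr
      rw [mul_mul_mul_comm, hr, mul_mul_mul_comm (f x)]
      simp only [map_mul]
      ac_rfl)
  refine ⟨c, -n, hc.mono fun x hx ↦ ?_⟩
  rw [torusChar_neg, ← hx, mul_inv_cancel_right]

end Affine

section Measurability

theorem measurable_of_measurable_edist {Y : Type*} [MeasurableSpace X] [PseudoEMetricSpace Y]
    [SecondCountableTopology Y] [MeasurableSpace Y] [BorelSpace Y] {f : X → Y}
    (h : ∀ c, Measurable fun x ↦ edist (f x) c) : Measurable f := by
  refine measurable_of_isOpen fun s hs ↦ ?_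
  let B (p : {p : Y × ENNReal // Metric.eball p.1 p.2 ⊆ s}) := Metric.eball p.1.1 p.1.2
  have hB : s = ⋃ p, B p := by
    refine (Set.iUnion_subset fun p ↦ p.2).antisymm' fun y hy ↦ ?_
    obtain ⟨r, hr, hrs⟩ := EMetric.isOpen_iff.1 hs y hy
    exact Set.mem_iUnion.2 ⟨⟨(y, r), hrs⟩, Metric.mem_eball_self hr⟩
  obtain ⟨t, ht, htB⟩ := TopologicalSpace.isOpen_iUnion_countable B fun _ ↦ Metric.isOpen_eball
  rw [hB, ← htB, Set.preimage_iUnion₂]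
  exact .biUnion ht fun p _ ↦ measurableSet_lt (h p.1.1) measurable_const

theorem measurable_toLp_curry {Y E : Type*} [MeasurableSpace X] [MeasurableSpace Y]
    {μ : Measure X} [SFinite μ] [NormedAddCommGroup E] [SecondCountableTopology E]
    [MeasurableSpace E] [BorelSpace E] {p : ENNReal} [Fact (1 ≤ p)]
    [SecondCountableTopology (Lp E p μ)] [MeasurableSpace (Lp E p μ)] [BorelSpace (Lp E p μ)]
    (hp : p ≠ ⊤) {F : Y → X → E} (hF : Measurable (Function.uncurry F))
    (hLp : ∀ y, MemLp (F y) p μ) :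
    Measurable fun y ↦ (hLp y).toLp := by
  refine measurable_of_measurable_edist fun c ↦ ?_
  have hc : Measurable c := (Lp.stronglyMeasurable c).measurable
  have hp0 : p ≠ 0 := (zero_lt_one.trans_le Fact.out).ne'
  have hdist (y : Y) : edist (hLp y).toLp c =
      (∫⁻ x, ‖F y x - c x‖ₑ ^ p.toReal ∂μ) ^ (1 / p.toReal) := by
    rw [Lp.edist_def, eLpNorm_eq_lintegral_rpow_enorm_toReal hp0 hp]
    congr 1
    refine lintegral_congr_ae ?_
    filter_upwards [(hLp y).coeFn_toLp] with x hx
    simp only [Pi.sub_apply, hx]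
  simp only [hdist]
  refine (Measurable.lintegral_prod_right' (f := fun q : Y × X ↦
    ‖F q.1 q.2 - c q.2‖ₑ ^ p.toReal) ?_).pow_const _
  exact ((hF.sub (hc.comp measurable_snd)).enorm).pow_const _

end Measurability

section IntegratedForm

variable {H : Type*} [NormedAddCommGroup H] [InnerProductSpace ℂ H]
  [MeasurableSpace X] {μ : Measure X} [IsProbabilityMeasure μ]
  {S : X → H ≃ₗᵢ[ℂ] H} (hS : ∀ f, AEStronglyMeasurable (fun x ↦ S x f) μ)

include hS in
theorem integrable_smul_apply (φ : Lp ℂ 2 μ) (f : H) : Integrable (fun x ↦ φ x • S x f) μ :=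
  ((Lp.memLp φ).integrable (by norm_num)).norm.mul_const ‖f‖ |>.mono'
    ((Lp.aestronglyMeasurable φ).smul (hS f)) (.of_forall fun x ↦ by simp [norm_smul])

/-- The integrated form `φ ↦ ∫ φ(x) S_x dμ(x)` of a measurable family `S` of unitaries. -/
def integratedForm : Lp ℂ 2 μ →L[ℂ] H →L[ℂ] H :=
  LinearMap.mkContinuous₂
    (LinearMap.mk₂ ℂ (fun φ f ↦ ∫ x, φ x • S x f ∂μ)
      (fun φ ψ f ↦ by
        rw [← integral_add (integrable_smul_apply hS φ f) (integrable_smul_apply hS ψ f)]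
        refine integral_congr_ae ?_
        filter_upwards [Lp.coeFn_add φ ψ] with x hx
        rw [hx, Pi.add_apply, add_smul])
      (fun c φ f ↦ by
        rw [← integral_smul]
        refine integral_congr_ae ?_
        filter_upwards [Lp.coeFn_smul c φ] with x hx
        rw [hx, Pi.smul_apply, smul_assoc])
      (fun φ f g ↦ by
        simp only [map_add, smul_add]
        exact integral_add (integrable_smul_apply hS φ f) (integrable_smul_apply hS φ g))
      (fun c φ f ↦ by simp only [map_smul, smul_comm _ c, integral_smul]))
    1 fun φ f ↦ calc
      ‖∫ x, φ x • S x f ∂μ‖ ≤ ∫ x, ‖φ x‖ * ‖f‖ ∂μ :=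
        (norm_integral_le_integral_norm _).trans_eq (by simp [norm_smul])
      _ = (eLpNorm φ 1 μ).toReal * ‖f‖ := by
        rw [integral_mul_const, eLpNorm_one_eq_lintegral_enorm,
          integral_norm_eq_lintegral_enorm (Lp.aestronglyMeasurable φ)]
      _ ≤ 1 * ‖φ‖ * ‖f‖ := by
        rw [one_mul, Lp.norm_def]
        gcongr
        · exact (Lp.memLp φ).2.ne
        · exact eLpNorm_le_eLpNorm_of_exponent_le (by norm_num) (Lp.aestronglyMeasurable φ)

theorem integratedForm_apply (φ : Lp ℂ 2 μ) (f : H) :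
    integratedForm hS φ f = ∫ x, φ x • S x f ∂μ := rfl

variable [CompleteSpace H]

theorem commute_integratedForm {T : H →L[ℂ] H} (hT : ∀ᵐ x ∂μ, ∀ f, T (S x f) = S x (T f))
    (φ : Lp ℂ 2 μ) : Commute T (integratedForm hS φ) := by
  ext f
  simp only [mul_apply_eq_comp, integratedForm_apply]
  rw [← T.integral_comp_comm (integrable_smul_apply hS φ f)]
  refine integral_congr_ae ?_
  filter_upwards [hT] with x hx
  rw [map_smul, hx]

theorem integratedForm_ne_zero [Nontrivial H] : ∃ φ, integratedForm hS φ ≠ 0 := by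
  by_contra! h
  obtain ⟨f, hf⟩ := exists_ne (0 : H)
  have hint : Integrable (fun x ↦ S x f) μ :=
    (integrable_const ‖f‖).mono' (hS f) (.of_forall fun x ↦ by simp)
  have hzero : (fun x ↦ S x f) =ᵐ[μ] 0 := by
    refine hint.ae_eq_zero_of_forall_setIntegral_eq_zero fun s hs hμs ↦ ?_
    have := congr($(h (indicatorConstLp 2 hs hμs.ne 1)) f)
    rw [integratedForm_apply, zero_apply] at this
    rw [← this, ← integral_indicator hs]
    refine integral_congr_ae ?_
    filter_upwards [indicatorConstLp_coeFn (p := 2) (hs := hs) (hμs := hμs.ne) (c := (1 : ℂ))]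
      with x hx
    by_cases hxs : x ∈ s <;> simp [hx, hxs]
  obtain ⟨x, hx⟩ := hzero.exists
  simp_all

theorem star_apply_comm {T : H →L[ℂ] H} {V : H ≃ₗᵢ[ℂ] H} (h : ∀ f, T (V f) = V (T f)) (f : H) :
    star T (V f) = V (star T f) := by
  refine ext_inner_right ℂ fun g ↦ ?_
  obtain ⟨g, rfl⟩ := V.surjective g
  rw [ContinuousLinearMap.star_eq_adjoint, ContinuousLinearMap.adjoint_inner_left, h,
    V.inner_map_map, V.inner_map_map, ContinuousLinearMap.adjoint_inner_left]

theorem integratedForm_apply_comm (hcomm : ∀ᵐ x ∂μ, ∀ᵐ y ∂μ, ∀ f, S x (S y f) = S y (S x f))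
    (φ : Lp ℂ 2 μ) : ∀ᵐ x ∂μ, ∀ f, integratedForm hS φ (S x f) = S x (integratedForm hS φ f) := by
  filter_upwards [hcomm] with x hx f
  exact congr($((commute_integratedForm (T := (S x : H →L[ℂ] H)) hS hx φ).eq) f).symm

theorem commute_integratedForm_integratedForm
    (hcomm : ∀ᵐ x ∂μ, ∀ᵐ y ∂μ, ∀ f, S x (S y f) = S y (S x f)) (φ ψ : Lp ℂ 2 μ) :
    Commute (integratedForm hS φ) (integratedForm hS ψ) :=
  commute_integratedForm hS (integratedForm_apply_comm hS hcomm φ) ψ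

theorem commute_star_integratedForm_integratedForm
    (hcomm : ∀ᵐ x ∂μ, ∀ᵐ y ∂μ, ∀ f, S x (S y f) = S y (S x f)) (φ ψ : Lp ℂ 2 μ) :
    Commute (star (integratedForm hS φ)) (integratedForm hS ψ) :=
  commute_integratedForm hS
    ((integratedForm_apply_comm hS hcomm φ).mono fun _ hx ↦ star_apply_comm hx) ψ

end IntegratedForm

theorem exists_functional_of_commute {A E : Type*} [CStarAlgebra A] [NormedAddCommGroup E]
    [NormedSpace ℂ E] (K : E →L[ℂ] A) (hcomm : ∀ φ ψ, Commute (K φ) (K ψ))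
    (hstar : ∀ φ ψ, Commute (star (K φ)) (K ψ)) (hK : ∃ φ, K φ ≠ 0) :
    ∃ ℓ : E →L[ℂ] ℂ, ℓ ≠ 0 ∧
      ∀ φ ψ φ' ψ', K φ * K ψ = K φ' * K ψ' → ℓ φ * ℓ ψ = ℓ φ' * ℓ ψ' := by
  obtain ⟨φ₀, h0⟩ := hK
  let S := StarAlgebra.adjoin ℂ (Set.range K)
  have : IsMulCommutative S :=
    StarAlgebra.isMulCommutative_adjoin ℂ (by rintro _ ⟨φ, rfl⟩ _ ⟨ψ, rfl⟩; exact hcomm φ ψ)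
      (by rintro _ ⟨φ, rfl⟩ _ ⟨ψ, rfl⟩; exact (hstar ψ φ).symm)
  let B := S.topologicalClosure
  have : IsClosed (B : Set A) := S.isClosed_topologicalClosure
  let _ : CommCStarAlgebra B :=
    { (StarSubalgebra.cstarAlgebra B : CStarAlgebra B) with
      mul_comm := (S.commRingTopologicalClosure mul_comm').mul_comm }
  let KB : E →L[ℂ] B := K.codRestrict (Subalgebra.toSubmodule B.toSubalgebra) fun φ ↦
    S.le_topologicalClosure (StarAlgebra.subset_adjoin ℂ _ ⟨φ, rfl⟩)
  have hne : WeakDual.gelfandTransform ℂ B (KB φ₀) ≠ 0 := fun h ↦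
    h0 (congrArg Subtype.val ((gelfandTransform_isometry B).injective (h.trans (map_zero _).symm)))
  obtain ⟨χ, hχ⟩ := DFunLike.ne_iff.1 hne
  refine ⟨(WeakDual.CharacterSpace.toCLM χ).comp KB, fun h ↦ hχ congr($h φ₀), ?_⟩
  intro φ ψ φ' ψ' h
  have hKB : KB φ * KB ψ = KB φ' * KB ψ' := Subtype.ext h
  exact (map_mul χ _ _).symm.trans ((congrArg χ hKB).trans (map_mul χ _ _))

theorem memLp_circle_mul_comp [MeasurableSpace X] {μ : Measure X} [IsFiniteMeasure μ]
    {p : ENNReal} {u : X → Circle} (hu : Measurable u) {σ : X → X}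
    (hσ : MeasurePreserving σ μ μ) {f : X → ℂ} (hf : MemLp f p μ) :
    MemLp (fun x ↦ (u x : ℂ) * f (σ x)) p μ :=
  (hf.comp_measurePreserving hσ).of_le
    ((integrable_coe_circle hu).1.mul (hf.comp_measurePreserving hσ).1)
    (.of_forall fun x ↦ by simp [Circle.norm_coe])

section TwistedShift

variable [Group X] [MeasurableSpace X] [MeasurableMul₂ X]
  {μ : Measure X} [IsFiniteMeasure μ] [μ.IsMulLeftInvariant] {U : X → X → Circle}
  (hU : Measurable (Function.uncurry U))

include hU in
theorem memLp_twistedShift (z : X) {f : X → ℂ} (hf : MemLp f 2 μ) :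
    MemLp (fun x ↦ (U z (z⁻¹ * x) : ℂ) * f (z⁻¹ * x)) 2 μ :=
  memLp_circle_mul_comp (u := fun x ↦ U z (z⁻¹ * x)) (hU.of_uncurry_left.comp (by fun_prop))
    (measurePreserving_mul_left μ z⁻¹) hf

variable (μ) in
/-- The operator `(S_z f)(x) = U(z, z⁻¹x) f(z⁻¹x)` of the left regular representation of `X` on
`L²(X)` twisted by `U`. -/
def twistedShift (z : X) : Lp ℂ 2 μ ≃ₗᵢ[ℂ] Lp ℂ 2 μ :=
  .ofSurjective
    { toFun f := (memLp_twistedShift hU z (Lp.memLp f)).toLp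
      map_add' f g := by
        rw [← MemLp.toLp_add]
        refine MemLp.toLp_congr _ _ ?_
        filter_upwards [(measurePreserving_mul_left μ z⁻¹).quasiMeasurePreserving.ae
          (Lp.coeFn_add f g)] with x hx
        simp only [Pi.add_apply, hx, mul_add]
      map_smul' c f := by
        rw [RingHom.id_apply, ← MemLp.toLp_const_smul]
        refine MemLp.toLp_congr _ _ ?_
        filter_upwards [(measurePreserving_mul_left μ z⁻¹).quasiMeasurePreserving.ae
          (Lp.coeFn_smul c f)] with x hx
        simp only [Pi.smul_apply, hx, mul_smul_comm]
      norm_map' f := by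
        rw [LinearMap.coe_mk, AddHom.coe_mk, Lp.norm_toLp, Lp.norm_def,
          ← eLpNorm_comp_measurePreserving (Lp.aestronglyMeasurable f)
            (measurePreserving_mul_left μ z⁻¹)]
        exact congrArg _ (eLpNorm_congr_norm_ae (.of_forall fun x ↦ by simp [Circle.norm_coe])) }
    fun g ↦ by
      have hf := memLp_circle_mul_comp (u := fun x ↦ (U z x)⁻¹) hU.of_uncurry_left.inv
        (measurePreserving_mul_left μ z) (Lp.memLp g)
      refine ⟨hf.toLp, Lp.ext ((memLp_twistedShift hU z (Lp.memLp _)).coeFn_toLp.trans ?_)⟩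
      filter_upwards [(measurePreserving_mul_left μ z⁻¹).quasiMeasurePreserving.ae
        hf.coeFn_toLp] with x hx
      rw [hx, mul_inv_cancel_left, Circle.coe_inv, mul_inv_cancel_left₀ (Circle.coe_ne_zero _)]

theorem coeFn_twistedShift (z : X) (f : Lp ℂ 2 μ) :
    twistedShift μ hU z f =ᵐ[μ] fun x ↦ (U z (z⁻¹ * x) : ℂ) * f (z⁻¹ * x) :=
  (memLp_twistedShift hU z (Lp.memLp f)).coeFn_toLp

theorem measurable_twistedShift [MeasurableInv X] [MeasurableSpace (Lp ℂ 2 μ)]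
    [BorelSpace (Lp ℂ 2 μ)] [SecondCountableTopology (Lp ℂ 2 μ)] (f : Lp ℂ 2 μ) :
    Measurable fun z ↦ twistedShift μ hU z f := by
  have hf : Measurable f := (Lp.stronglyMeasurable f).measurable
  refine measurable_toLp_curry (F := fun z x ↦ (U z (z⁻¹ * x) : ℂ) * f (z⁻¹ * x)) (by simp) ?_
    fun z ↦ memLp_twistedShift hU z (Lp.memLp f)
  have hcoe : Measurable fun z : Circle ↦ (z : ℂ) := by fun_prop
  exact (hcoe.comp (hU.comp (by fun_prop :
    Measurable fun p : X × X ↦ (p.1, p.1⁻¹ * p.2)))).mul (by fun_prop)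

theorem twistedShift_twistedShift {y z : X}
    (h : ∀ᵐ t ∂μ, U y z * U (y * z) t = U y (z * t) * U z t) (f : Lp ℂ 2 μ) :
    twistedShift μ hU y (twistedShift μ hU z f) = (U y z : ℂ) • twistedShift μ hU (y * z) f := by
  refine Lp.ext ?_
  filter_upwards [coeFn_twistedShift hU y (twistedShift μ hU z f),
    (measurePreserving_mul_left μ y⁻¹).quasiMeasurePreserving.ae (coeFn_twistedShift hU z f),
    Lp.coeFn_smul (U y z : ℂ) (twistedShift μ hU (y * z) f), coeFn_twistedShift hU (y * z) f,
    (measurePreserving_mul_left μ (y * z)⁻¹).quasiMeasurePreserving.ae h] with x h1 h2 h3 h4 h5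
  have h5 : (U y z * U (y * z) (z⁻¹ * (y⁻¹ * x)) : ℂ) =
      U y (y⁻¹ * x) * U z (z⁻¹ * (y⁻¹ * x)) := by
    simpa [mul_assoc, ← Circle.coe_mul] using congr(($h5 : ℂ))
  rw [h1, h2, h3, Pi.smul_apply, h4, smul_eq_mul, ← mul_assoc, ← h5]
  simp only [mul_inv_rev, mul_assoc]

end TwistedShift

section TwistedEigenfunction

variable [Group X] [MeasurableSpace X] [MeasurableMul₂ X] [MeasurableInv X]
  [MeasurableSpace.CountablyGenerated X]
  {μ : Measure X} [IsProbabilityMeasure μ] [μ.IsMulLeftInvariant] {U : X → X → Circle}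
  (hU : Measurable (Function.uncurry U))

theorem aestronglyMeasurable_twistedShift (f : Lp ℂ 2 μ) :
    AEStronglyMeasurable (fun z ↦ twistedShift μ hU z f) μ := by
  let _ : MeasurableSpace (Lp ℂ 2 μ) := borel _
  have : BorelSpace (Lp ℂ 2 μ) := ⟨rfl⟩
  have : Fact ((2 : ENNReal) ≠ ⊤) := ⟨by simp⟩
  exact (measurable_twistedShift hU f).aestronglyMeasurable

theorem twistedShift_integratedForm {z : X}
    (h : ∀ᵐ y ∂μ, ∀ᵐ t ∂μ, U z y * U (z * y) t = U z (y * t) * U y t) (φ f : Lp ℂ 2 μ) :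
    twistedShift μ hU z (integratedForm (aestronglyMeasurable_twistedShift hU) φ f) =
      integratedForm (aestronglyMeasurable_twistedShift hU) (twistedShift μ hU z φ) f := by
  let L : Lp ℂ 2 μ →L[ℂ] Lp ℂ 2 μ :=
    (twistedShift μ hU z).toContinuousLinearEquiv
  calc
    L (∫ y, φ y • twistedShift μ hU y f ∂μ) = ∫ y, L (φ y • twistedShift μ hU y f) ∂μ :=
      (L.integral_comp_comm (integrable_smul_apply (aestronglyMeasurable_twistedShift hU) φ f)).symm
    _ = ∫ y, ((U z y : ℂ) * φ y) • twistedShift μ hU (z * y) f ∂μ := by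
      refine integral_congr_ae ?_
      filter_upwards [h] with y hy
      rw [map_smul, mul_comm, mul_smul, ← twistedShift_twistedShift hU hy]
      rfl
    _ = ∫ y, ((U z (z⁻¹ * y) : ℂ) * φ (z⁻¹ * y)) • twistedShift μ hU y f ∂μ := by
      simpa using integral_mul_left_eq_self (μ := μ)
        (fun y ↦ ((U z (z⁻¹ * y) : ℂ) * φ (z⁻¹ * y)) • twistedShift μ hU y f) z
    _ = ∫ y, (twistedShift μ hU z φ : Lp ℂ 2 μ) y • twistedShift μ hU y f ∂μ := by
      refine integral_congr_ae ?_
      filter_upwards [coeFn_twistedShift hU z φ] with y hy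
      rw [hy]

end TwistedEigenfunction

section Commutative

variable [CommGroup X] [MeasurableSpace X] [MeasurableMul₂ X] {μ : Measure X}
  [IsProbabilityMeasure μ] [μ.IsMulLeftInvariant] {U : X → X → Circle}
  (hU : Measurable (Function.uncurry U))
  (hcoc : ∀ᵐ p ∂μ.prod μ, ∀ᵐ t ∂μ, U p.1 p.2 * U (p.1 * p.2) t = U p.1 (p.2 * t) * U p.2 t)
  (hsymm : ∀ᵐ p ∂μ.prod μ, U p.1 p.2 = U p.2 p.1)

include hcoc hsymm in
theorem ae_twistedShift_comm : ∀ᵐ y ∂μ, ∀ᵐ z ∂μ, ∀ f,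
    twistedShift μ hU y (twistedShift μ hU z f) =
      twistedShift μ hU z (twistedShift μ hU y f) := by
  have hcoc' := Measure.measurePreserving_swap.quasiMeasurePreserving.ae hcoc
  refine Measure.ae_ae_of_ae_prod (p := fun p : X × X ↦ ∀ f, twistedShift μ hU p.1
    (twistedShift μ hU p.2 f) = twistedShift μ hU p.2 (twistedShift μ hU p.1 f)) ?_
  filter_upwards [hcoc, hcoc', hsymm] with p h1 h2 h3 f
  rw [twistedShift_twistedShift hU h1, h3, mul_comm p.1]
  exact (twistedShift_twistedShift hU h2 f).symm

variable [MeasurableInv X] [MeasurableSpace.CountablyGenerated X]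

include hcoc hsymm in
theorem exists_twistedShift_eigenfunctional : ∃ (ℓ : Lp ℂ 2 μ →L[ℂ] ℂ) (l : X → ℂ), ℓ ≠ 0 ∧
    Measurable l ∧ ∀ᵐ z ∂μ, ∀ φ, ℓ (twistedShift μ hU z φ) = l z * ℓ φ := by
  let _ : MeasurableSpace (Lp ℂ 2 μ) := borel _
  have : BorelSpace (Lp ℂ 2 μ) := ⟨rfl⟩
  have : Fact ((2 : ENNReal) ≠ ⊤) := ⟨by simp⟩
  have : Nontrivial (Lp ℂ 2 μ) := nontrivial_of_ne (Lp.const 2 μ 1) 0 fun h ↦ by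
    simpa [Lp.norm_const] using congrArg norm h
  have hcomm := ae_twistedShift_comm hU hcoc hsymm
  have hS := aestronglyMeasurable_twistedShift (μ := μ) hU
  have hKcomm := commute_integratedForm_integratedForm hS hcomm
  obtain ⟨ℓ, hℓ, hmul⟩ := exists_functional_of_commute (integratedForm hS) hKcomm
    (commute_star_integratedForm_integratedForm hS hcomm) (integratedForm_ne_zero hS)
  obtain ⟨ψ, hψ⟩ := DFunLike.ne_iff.1 hℓ
  refine ⟨ℓ, fun z ↦ ℓ (twistedShift μ hU z ψ) / ℓ ψ, hℓ,
    (ℓ.continuous.measurable.comp (measurable_twistedShift hU ψ)).div_const _, ?_⟩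
  filter_upwards [Measure.ae_ae_of_ae_prod hcoc] with z hz φ
  have hK (φ ψ) : integratedForm hS (twistedShift μ hU z φ) * integratedForm hS ψ =
      ((twistedShift μ hU z).toContinuousLinearEquiv : Lp ℂ 2 μ →L[ℂ] Lp ℂ 2 μ) *
        (integratedForm hS φ * integratedForm hS ψ) := by
    ext1 f
    exact (twistedShift_integratedForm hU hz φ (integratedForm hS ψ f)).symm
  have := hmul (twistedShift μ hU z φ) ψ (twistedShift μ hU z ψ) φ
    (by rw [hK, hK, (hKcomm φ ψ).eq])
  rw [div_mul_eq_mul_div, eq_div_iff hψ, this]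

include hcoc hsymm in
theorem exists_twistedShift_eigenvector : ∃ (w : Lp ℂ 2 μ) (l : X → Circle), w ≠ 0 ∧
    Measurable l ∧ ∀ᵐ z ∂μ, twistedShift μ hU z w = (l z : ℂ) • w := by
  obtain ⟨ℓ, l, hℓ, hl, hSℓ⟩ := exists_twistedShift_eigenfunctional hU hcoc hsymm
  obtain ⟨w, rfl⟩ := (InnerProductSpace.toDual ℂ (Lp ℂ 2 μ)).surjective ℓ
  have hw : w ≠ 0 := fun h ↦ hℓ (by rw [h, map_zero])
  refine ⟨w, fun z ↦ Circle.exp (l z).arg, hw,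
    Circle.exp.continuous.measurable.comp (Complex.measurable_arg.comp hl), ?_⟩
  filter_upwards [hSℓ] with z hz
  have hadj : w = star (l z) • twistedShift μ hU z w := by
    refine ext_inner_right ℂ fun φ ↦ ?_
    obtain ⟨φ, rfl⟩ := (twistedShift μ hU z).surjective φ
    rw [inner_smul_left, LinearIsometryEquiv.inner_map_map]
    simpa using hz φ
  have hnorm : ‖l z‖ = 1 := by
    have := congrArg norm hadj
    rwa [norm_smul, norm_star, LinearIsometryEquiv.norm_map, eq_comm,
      mul_eq_right₀ (norm_ne_zero_iff.2 hw)] at this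
  have hexp : (Circle.exp (l z).arg : ℂ) = l z := by
    simpa [hnorm] using Complex.norm_mul_exp_arg_mul_I (l z)
  nth_rw 2 [hadj]
  rw [hexp, smul_smul, Complex.star_def, Complex.mul_conj', hnorm]
  simp

include hU hcoc hsymm in
theorem exists_ae_eq_mul_coboundary : ∃ v : X → Circle, Measurable v ∧
    ∀ᵐ z ∂μ, ∀ᵐ y ∂μ, U z y * v (z * y) = v z * v y := by
  obtain ⟨w, l, hw, hl, hSw⟩ := exists_twistedShift_eigenvector hU hcoc hsymm
  have hwm : Measurable w := (Lp.stronglyMeasurable w).measurable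
  have hcoe : Measurable fun z : Circle ↦ (z : ℂ) := by fun_prop
  have heig : ∀ᵐ z ∂μ, ∀ᵐ y ∂μ, (U z y * w y : ℂ) = l z * w (z * y) := by
    filter_upwards [hSw] with z hz
    filter_upwards [(measurePreserving_mul_left μ z).quasiMeasurePreserving.ae
      ((coeFn_twistedShift hU z w).symm.trans (hz ▸ Lp.coeFn_smul (l z : ℂ) w))] with y hy
    simpa using hy
  have hconst : ∀ᵐ z ∂μ, ∀ᵐ y ∂μ, l z * w z = l y * w y := by
    have hswap : ∀ᵐ z ∂μ, ∀ᵐ y ∂μ, (U y z * w z : ℂ) = l y * w (y * z) :=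
      (Measure.ae_ae_comm (p := fun z y ↦ (U z y * w y : ℂ) = l z * w (z * y)) <|
        measurableSet_eq_fun ((hcoe.comp hU).mul (hwm.comp measurable_snd))
          ((hcoe.comp (hl.comp measurable_fst)).mul (hwm.comp measurable_mul))).1 heig
    filter_upwards [heig, hswap, Measure.ae_ae_of_ae_prod hsymm] with z h1 h2 h3
    filter_upwards [h1, h2, h3] with y h1 h2 h3
    rw [← h3, mul_comm y] at h2
    refine mul_left_cancel₀ (Circle.coe_ne_zero (U z y)) ?_
    linear_combination (l z : ℂ) * h2 - (l y : ℂ) * h1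
  obtain ⟨z₀, hz₀⟩ := hconst.exists
  have hk : l z₀ * w z₀ ≠ 0 := fun hk ↦ hw <| (Lp.eq_zero_iff_ae_eq_zero).2 <| hz₀.mono fun y hy ↦
    (mul_eq_zero.1 (hy.symm.trans hk)).resolve_left (Circle.coe_ne_zero _)
  refine ⟨l, hl, ?_⟩
  filter_upwards [heig] with z hz
  filter_upwards [hz, hz₀, (measurePreserving_mul_left μ z).quasiMeasurePreserving.ae hz₀]
    with y h1 h2 h3
  have hwy : w y ≠ 0 := right_ne_zero_of_mul (h2 ▸ hk)
  refine Circle.ext (mul_right_cancel₀ hwy ?_)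
  simp only [Circle.coe_mul]
  linear_combination (l (z * y) : ℂ) * h1 + (l z : ℂ) * (h2 - h3)

end Commutative

section Powers

set_option synthInstance.maxSize 512

attribute [local instance] arrowMulDistribMulAction

theorem infinite_orbit_sigma {κ ι : Type*} [Group G] [MulAction G ι]
    (hι : ∀ i : ι, (MulAction.orbit G i).Infinite) (j : Σ _ : κ, ι) :
    (MulAction.orbit G j).Infinite := by
  refine ((hι j.2).image (sigma_mk_injective (i := j.1)).injOn).mono ?_
  rintro _ ⟨_, ⟨g, rfl⟩, rfl⟩
  exact ⟨g, rfl⟩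

theorem ae_eq_const_of_comp_smul_eq_mul_prod {ι : Type*} [Countable ι] [Group G] [MulAction G ι]
    (hι : ∀ i : ι, (MulAction.orbit G i).Infinite)
    (μ : Measure (ι → Circle)) [IsProbabilityMeasure μ] [μ.IsHaarMeasure]
    {F : (ι → Circle) × (ι → Circle) × (ι → Circle) × (ι → Circle) → Circle}
    (hF : Measurable F) {l : G → Circle}
    (h : ∀ g : G, ∀ᵐ p ∂μ.prod (μ.prod (μ.prod μ)), F (g • p) = l g * F p) :
    ∃ c, ∀ᵐ p ∂μ.prod (μ.prod (μ.prod μ)), F p = c := by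
  let M : Measure ((Σ _ : Fin 4, ι) → Circle) := Measure.haarMeasure ⊤
  have : IsProbabilityMeasure M := ⟨Measure.haarMeasure_self⟩
  let T (z : (Σ _ : Fin 4, ι) → Circle) :
      (ι → Circle) × (ι → Circle) × (ι → Circle) × (ι → Circle) :=
    (fun i ↦ z ⟨0, i⟩, fun i ↦ z ⟨1, i⟩, fun i ↦ z ⟨2, i⟩, fun i ↦ z ⟨3, i⟩)
  have hT : MeasurePreserving T M (μ.prod (μ.prod (μ.prod μ))) :=
    measurePreserving_of_hom _ _ T (fun p ↦ ⟨fun j ↦ ![p.1, p.2.1, p.2.2.1, p.2.2.2] j.1 j.2, rfl⟩)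
      (fun _ _ ↦ rfl)
  have hequiv (g : G) (z) : T (fun j ↦ z (g • j)) = g⁻¹ • T z := by
    ext i <;> exact congrArg (fun k ↦ (z ⟨_, k • i⟩ : ℂ)) (inv_inv g).symm
  obtain ⟨c, hc⟩ := ae_eq_const_of_comp_smul_eq_mul (G := G) M (infinite_orbit_sigma hι)
    (hF.comp hT.measurable) (l := fun g ↦ l g⁻¹) fun g ↦ by
      filter_upwards [hT.quasiMeasurePreserving.ae (h g⁻¹)] with z hz
      exact (congrArg F (hequiv g z)).trans hz
  refine ⟨c, ?_⟩
  rw [← hT.map_eq, ae_map_iff hT.aemeasurable (measurableSet_eq_fun hF measurable_const)]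
  exact hc

theorem IsCocycleSuperrigid.of_measurableEquiv {X Y : Type*} [Group G] [MeasurableSpace X]
    [MeasurableSpace Y] {a : G → X → X} {a' : G → Y → Y} {μ : Measure X} {ν : Measure Y}
    (h : IsCocycleSuperrigid a μ) (e : X ≃ᵐ Y) (he : MeasurePreserving e μ ν)
    (hequiv : ∀ g x, e (a g x) = a' g (e x)) : IsCocycleSuperrigid a' ν := by
  rintro c ⟨hcm, hc⟩
  obtain ⟨l, b, hb, hcb⟩ := h (fun g x ↦ c g (e x)) ⟨fun g ↦ (hcm g).comp e.measurable,
    fun g g' ↦ by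
      filter_upwards [he.quasiMeasurePreserving.ae (hc g g')] with x hx
      rw [hx, hequiv]⟩
  refine ⟨l, b ∘ e.symm, hb.comp e.symm.measurable, fun g ↦ ?_⟩
  filter_upwards [(he.symm e).quasiMeasurePreserving.ae (hcb g)] with y hy
  have hsymm : e.symm (a' g⁻¹ y) = a g⁻¹ (e.symm y) := by
    rw [e.symm_apply_eq, hequiv, e.apply_symm_apply]
  simpa [hsymm] using hy

theorem InClassG.isCocycleSuperrigid_prod [Group G] [Countable G] (hG : InClassG G)
    (μ : Measure (G → Circle)) [IsProbabilityMeasure μ] [μ.IsHaarMeasure] :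
    IsCocycleSuperrigid (fun (g : G) (p : (G → Circle) × (G → Circle) × (G → Circle)) ↦ g • p)
      (μ.prod (μ.prod μ)) := by
  let ν : Measure (Circle × Circle × Circle) := Measure.haarMeasure ⊤
  have : IsProbabilityMeasure ν := ⟨Measure.haarMeasure_self⟩
  have hM : IsBernoulliMeasure ν (Measure.infinitePi fun _ : G ↦ ν) :=
    fun s t ht ↦ Measure.infinitePi_pi _ fun i _ ↦ ht i
  have := hM.isHaarMeasure
  let e : (G → Circle × Circle × Circle) ≃ᵐ (G → Circle) × (G → Circle) × (G → Circle) :=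
    { toFun z := (fun i ↦ (z i).1, fun i ↦ (z i).2.1, fun i ↦ (z i).2.2)
      invFun p i := (p.1 i, p.2.1 i, p.2.2 i)
      measurable_toFun := by dsimp; fun_prop
      measurable_invFun := by dsimp; fun_prop }
  exact (hG _ ν _ hM).of_measurableEquiv e
    (measurePreserving_of_hom _ _ e e.surjective (fun _ _ ↦ rfl)
      (by dsimp [e]; fun_prop)) fun _ _ ↦ rfl

end Powers

section DifferenceOperators

variable {M : Type*} [CommGroup M]

/-- The operator `W ↦ W(x, y, r) / W(x, r, y)` measuring the failure of symmetry. -/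
def swapDiff : (X × X × X → M) →* (X × X × X → M) where
  toFun W p := W p / W (p.1, p.2.2, p.2.1)
  map_one' := by ext; simp
  map_mul' f g := by ext; simp only [Pi.mul_apply, div_eq_mul_inv, mul_inv]; ac_rfl

theorem swapDiff_apply (W : X × X × X → M) (p : X × X × X) :
    swapDiff W p = W p / W (p.1, p.2.2, p.2.1) := rfl

theorem swapDiff_const (c : M) : swapDiff (fun _ : X × X × X ↦ c) = 1 := by
  ext; simp [swapDiff_apply]

theorem swapDiff_comp_smul (W : X × X × X → M) [SMul G X] (g : G) :
    swapDiff (fun p ↦ W (g • p)) = fun p ↦ swapDiff W (g • p) := rfl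

theorem measurable_swapDiff [MeasurableSpace M] [MeasurableDiv₂ M] [MeasurableSpace X]
    {W : X × X × X → M} (hW : Measurable W) : Measurable (swapDiff W) :=
  hW.div (hW.comp (by fun_prop))

variable [Group X]

/-- The operator `f ↦ f(xy) f(xr) / (f(x) f(xyr))`, which for fixed `x` is the coboundary of the
translate `f(x·)` and whose kernel consists of the affine maps. -/
def mixedDiff : (X → M) →* (X × X × X → M) where
  toFun f p := f (p.1 * p.2.1) * f (p.1 * p.2.2) / (f p.1 * f (p.1 * p.2.1 * p.2.2))
  map_one' := by ext; simp
  map_mul' f g := by ext; simp only [Pi.mul_apply, div_eq_mul_inv, mul_inv]; ac_rfl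

/-- The operator `W ↦ W(x, y, r) W(xy, z, r) / W(x, yz, r)`: it is trivial on the range
of `mixedDiff` and fixes constants. -/
def baseDiff : (X × X × X → M) →* (X × X × X × X → M) where
  toFun W p := W (p.1, p.2.1, p.2.2.2) * W (p.1 * p.2.1, p.2.2.1, p.2.2.2) /
    W (p.1, p.2.1 * p.2.2.1, p.2.2.2)
  map_one' := by ext; simp
  map_mul' f g := by ext; simp only [Pi.mul_apply, div_eq_mul_inv, mul_inv]; ac_rfl

theorem mixedDiff_apply (f : X → M) (p : X × X × X) : mixedDiff f p =
    f (p.1 * p.2.1) * f (p.1 * p.2.2) / (f p.1 * f (p.1 * p.2.1 * p.2.2)) := rfl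

theorem baseDiff_apply (W : X × X × X → M) (p : X × X × X × X) : baseDiff W p =
    W (p.1, p.2.1, p.2.2.2) * W (p.1 * p.2.1, p.2.2.1, p.2.2.2) /
      W (p.1, p.2.1 * p.2.2.1, p.2.2.2) := rfl

theorem mixedDiff_const (c : M) : mixedDiff (fun _ : X ↦ c) = 1 := by
  ext; simp [mixedDiff_apply]

theorem baseDiff_const (c : M) : baseDiff (fun _ : X × X × X ↦ c) = fun _ ↦ c := by
  ext; simp [baseDiff_apply]

theorem baseDiff_mixedDiff (f : X → M) : baseDiff (mixedDiff f) = 1 := by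
  ext ⟨x, y, z, r⟩
  simp only [baseDiff_apply, mixedDiff_apply, Pi.one_apply, mul_assoc]
  rw [div_mul_div_comm, div_div_div_eq, div_eq_one]
  ac_rfl

theorem swapDiff_mixedDiff {X : Type*} [CommGroup X] (f : X → M) : swapDiff (mixedDiff f) = 1 := by
  ext p
  simp only [swapDiff_apply, mixedDiff_apply, Pi.one_apply, mul_right_comm p.1 p.2.2,
    mul_comm (f (p.1 * p.2.2)), div_self']

theorem mixedDiff_monoidHom {F : Type*} [FunLike F X M] [MonoidHomClass F X M] (χ : F) :
    mixedDiff χ = 1 := by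
  ext
  simp only [mixedDiff_apply, map_mul, Pi.one_apply, div_eq_one]
  ac_rfl

section Equivariance

variable [Monoid G] [MulDistribMulAction G X] (g : G)

theorem mixedDiff_comp_smul (f : X → M) :
    mixedDiff (fun x ↦ f (g • x)) = fun p ↦ mixedDiff f (g • p) := by
  ext; simp [mixedDiff_apply, smul_mul']

theorem baseDiff_comp_smul (W : X × X × X → M) :
    baseDiff (fun p ↦ W (g • p)) = fun p ↦ baseDiff W (g • p) := by
  ext ⟨x, y, z, r⟩; simp [baseDiff_apply, smul_mul']

end Equivariance

section Measurability

variable [MeasurableSpace M] [MeasurableMul₂ M] [MeasurableDiv₂ M] [MeasurableSpace X]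
  [MeasurableMul₂ X]

theorem measurable_mixedDiff {f : X → M} (hf : Measurable f) : Measurable (mixedDiff f) := by
  change Measurable fun p ↦ mixedDiff f p
  simp only [mixedDiff_apply]
  fun_prop

theorem measurable_baseDiff {W : X × X × X → M} (hW : Measurable W) :
    Measurable (baseDiff W) := by
  change Measurable fun p ↦ baseDiff W p
  simp only [baseDiff_apply]
  fun_prop

end Measurability

end DifferenceOperators

section MixedDiff

set_option synthInstance.maxSize 512

theorem ae_comp_of_hom {A B : Type*} [Group A] [TopologicalSpace A]
    [IsTopologicalGroup A] [CompactSpace A] [MeasurableSpace A] [BorelSpace A]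
    [Group B] [TopologicalSpace B] [IsTopologicalGroup B]
    [CompactSpace B] [MeasurableSpace B] [BorelSpace B] [SecondCountableTopology B]
    {α : Measure A} [IsProbabilityMeasure α] [α.IsHaarMeasure]
    {β : Measure B} [IsProbabilityMeasure β] [β.IsHaarMeasure] {p : B → Prop}
    (h : ∀ᵐ y ∂β, p y) (f : A → B) (hsurj : f.Surjective)
    (hmul : ∀ x y, f (x * y) = f x * f y := by intros; (try ext) <;> simp [mul_mul_mul_comm])
    (hf : Continuous f := by fun_prop) : ∀ᵐ x ∂α, p (f x) :=
  (measurePreserving_of_hom α β f hsurj hmul hf).quasiMeasurePreserving.ae h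

theorem ae_smul_of_ae [Group G] {B : Type*} [Group B] [TopologicalSpace B] [IsTopologicalGroup B]
    [CompactSpace B] [MeasurableSpace B] [BorelSpace B] [SecondCountableTopology B]
    [MulDistribMulAction G B] [ContinuousConstSMul G B]
    {β : Measure B} [IsProbabilityMeasure β] [β.IsHaarMeasure] {p : B → Prop}
    (h : ∀ᵐ y ∂β, p y) (g : G) : ∀ᵐ y ∂β, p (g • y) :=
  ae_comp_of_hom h (g • ·) (MulAction.surjective g) (smul_mul' g)

variable [CommGroup X] [TopologicalSpace X] [IsTopologicalGroup X] [CompactSpace X]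
  [SecondCountableTopology X] [MeasurableSpace X] [BorelSpace X]
  {μ : Measure X} [IsProbabilityMeasure μ] [μ.IsHaarMeasure]

theorem mixedDiff_congr_ae {M : Type*} [CommGroup M] {f g : X → M} (h : f =ᵐ[μ] g) :
    mixedDiff f =ᵐ[μ.prod (μ.prod μ)] mixedDiff g := by
  filter_upwards [ae_comp_of_hom h (fun p : X × X × X ↦ p.1) Prod.fst_surjective,
    ae_comp_of_hom h (fun p : X × X × X ↦ p.1 * p.2.1) fun x ↦ ⟨(x, 1), by simp⟩,
    ae_comp_of_hom h (fun p : X × X × X ↦ p.1 * p.2.2) fun x ↦ ⟨(x, 1), by simp⟩,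
    ae_comp_of_hom h (fun p : X × X × X ↦ p.1 * p.2.1 * p.2.2) (fun x ↦ ⟨(x, 1), by simp⟩)
      fun _ _ ↦ by simp only [Prod.fst_mul, Prod.snd_mul]; ac_rfl]
    with p h₁ h₂ h₃ h₄
  rw [mixedDiff_apply, mixedDiff_apply, h₁, h₂, h₃, h₄]

theorem swapDiff_congr_ae {M : Type*} [CommGroup M] {W W' : X × X × X → M}
    (h : W =ᵐ[μ.prod (μ.prod μ)] W') :
    swapDiff W =ᵐ[μ.prod (μ.prod μ)] swapDiff W' := by
  filter_upwards [h, ae_comp_of_hom h (fun p : X × X × X ↦ (p.1, p.2.2, p.2.1))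
    fun p ↦ ⟨(p.1, p.2.2, p.2.1), rfl⟩] with p h₁ h₂
  rw [swapDiff_apply, swapDiff_apply, h₁, h₂]

theorem baseDiff_congr_ae {M : Type*} [CommGroup M] {W W' : X × X × X → M}
    (h : W =ᵐ[μ.prod (μ.prod μ)] W') :
    baseDiff W =ᵐ[μ.prod (μ.prod (μ.prod μ))] baseDiff W' := by
  filter_upwards [
    ae_comp_of_hom h (fun p : X × X × X × X ↦ (p.1, p.2.1, p.2.2.2))
      fun p ↦ ⟨(p.1, p.2.1, 1, p.2.2), rfl⟩,
    ae_comp_of_hom h (fun p : X × X × X × X ↦ (p.1 * p.2.1, p.2.2.1, p.2.2.2))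
      fun p ↦ ⟨(p.1, 1, p.2), by simp⟩,
    ae_comp_of_hom h (fun p : X × X × X × X ↦ (p.1, p.2.1 * p.2.2.1, p.2.2.2))
      fun p ↦ ⟨(p.1, p.2.1, 1, p.2.2), by simp⟩] with p h₁ h₂ h₃
  rw [baseDiff_apply, baseDiff_apply, h₁, h₂, h₃]

theorem eq_one_of_ae_cocycle_defect {M : Type*} [CommGroup M] {U : X → X → M} {k : M}
    (h : ∀ᵐ p ∂μ.prod (μ.prod μ), U p.2.1 p.2.2 * U p.1 (p.2.1 * p.2.2) =
      k * (U p.1 p.2.1 * U (p.1 * p.2.1) p.2.2)) : k = 1 := by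
  obtain ⟨⟨a, b, c, d⟩, h₁, h₂, h₃, h₄, h₅⟩ :=
    (((ae_comp_of_hom h (fun p : X × X × X × X ↦ (p.1, p.2.1, p.2.2.1))
      fun p ↦ ⟨(p.1, p.2.1, p.2.2, 1), rfl⟩).and <|
    (ae_comp_of_hom h (fun p : X × X × X × X ↦ p.2) fun p ↦ ⟨(1, p), rfl⟩).and <|
    (ae_comp_of_hom h (fun p : X × X × X × X ↦ (p.1, p.2.1, p.2.2.1 * p.2.2.2))
      fun p ↦ ⟨(p.1, p.2.1, p.2.2, 1), by simp⟩).and <|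
    (ae_comp_of_hom h (fun p : X × X × X × X ↦ (p.1 * p.2.1, p.2.2.1, p.2.2.2))
      fun p ↦ ⟨(p.1, 1, p.2), by simp⟩).and <|
    (ae_comp_of_hom h (fun p : X × X × X × X ↦ (p.1, p.2.1 * p.2.2.1, p.2.2.2))
      fun p ↦ ⟨(p.1, p.2.1, 1, p.2.2), by simp⟩)) :
        ∀ᵐ p ∂μ.prod (μ.prod (μ.prod μ)), _).exists
  simp only [mul_assoc] at h₁ h₂ h₃ h₄ h₅
  generalize U (a * (b * c)) d = s at h₄ h₅
  -- The product of three of the five instances carries `k ^ 3`, that of the other two `k ^ 2`.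
  have h₁₂₅ := congrArg₂ (· * ·) (congrArg₂ (· * ·) h₁ h₂) h₅
  have h₃₄ := congrArg₂ (· * ·) h₃ h₄
  refine mul_eq_right.1 (Eq.trans ?_ (congrArg₂ (· * ·) h₁₂₅ h₃₄.symm).symm)
  ac_rfl

theorem ae_cocycle_defect_of_ratio {M : Type*} [CommGroup M] {U : X → X → M}
    {V : X × X × X → M} {k : M}
    (hUV : ∀ᵐ p ∂μ.prod (μ.prod μ), U p.1 p.2.2 * V p = U (p.1 * p.2.1) p.2.2)
    (hUk : ∀ᵐ p ∂μ.prod μ, U p.1 p.2 = k * U p.2 p.1)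
    (hVk : ∀ᵐ p ∂μ.prod (μ.prod μ), V p = k * V (p.1, p.2.2, p.2.1)) :
    ∀ᵐ p ∂μ.prod (μ.prod μ), U p.2.1 p.2.2 * U p.1 (p.2.1 * p.2.2) =
      k * (U p.1 p.2.1 * U (p.1 * p.2.1) p.2.2) := by
  filter_upwards [
    ae_comp_of_hom hUk (fun p : X × X × X ↦ (p.1, p.2.1)) fun p ↦ ⟨(p.1, p.2, 1), rfl⟩,
    ae_comp_of_hom hUk (fun p : X × X × X ↦ (p.1, p.2.1 * p.2.2))
      fun p ↦ ⟨(p.1, p.2, 1), by simp⟩,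
    ae_comp_of_hom hUV (fun p : X × X × X ↦ (p.2.1, p.2.2, p.1))
      fun p ↦ ⟨(p.2.2, p.1, p.2.1), rfl⟩,
    ae_comp_of_hom hUV (fun p : X × X × X ↦ (p.2.1, p.1, p.2.2))
      fun p ↦ ⟨(p.2.1, p.1, p.2.2), rfl⟩,
    ae_comp_of_hom hVk (fun p : X × X × X ↦ (p.2.1, p.2.2, p.1))
      fun p ↦ ⟨(p.2.2, p.1, p.2.1), rfl⟩]
  rintro ⟨y, z, r⟩ hyz hyzr hzry hzyr hV
  dsimp only at *
  calc U z r * U y (z * r)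
      = k * (U z r * (U z y * V (z, r, y))) := by rw [hyzr, hzry, mul_left_comm]
    _ = k * (k * U z y * (U z r * V (z, y, r))) := by rw [hV]; ac_rfl
    _ = k * (U y z * U (y * z) r) := by rw [hzyr, hyz, mul_comm z y]

theorem exists_ae_eq_mixedDiff_of_ratio {U : X → X → Circle} {V : X × X × X → Circle}
    {k : Circle} (hU : Measurable (Function.uncurry U))
    (hUV : ∀ᵐ p ∂μ.prod (μ.prod μ), U p.1 p.2.2 * V p = U (p.1 * p.2.1) p.2.2)
    (hUk : ∀ᵐ p ∂μ.prod μ, U p.1 p.2 = k * U p.2 p.1)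
    (hVk : ∀ᵐ p ∂μ.prod (μ.prod μ), V p = k * V (p.1, p.2.2, p.2.1)) :
    ∃ v : X → Circle, Measurable v ∧ ∀ᵐ p ∂μ.prod (μ.prod μ), V p = mixedDiff v p := by
  have hdefect := ae_cocycle_defect_of_ratio hUV hUk hVk
  obtain rfl : k = 1 := eq_one_of_ae_cocycle_defect hdefect
  simp only [one_mul] at hUk hdefect
  obtain ⟨v, hv, hUv⟩ := exists_ae_eq_mul_coboundary (μ := μ) hU
    (Measure.ae_ae_of_ae_prod <| ae_comp_of_hom hdefect
      (fun p : (X × X) × X ↦ (p.1.1, p.1.2, p.2)) (fun p ↦ ⟨((p.1, p.2.1), p.2.2), rfl⟩) |>.mono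
        fun p h ↦ h.symm.trans (mul_comm _ _)) hUk
  have hUv' : ∀ᵐ p ∂μ.prod μ, U p.1 p.2 * v (p.1 * p.2) = v p.1 * v p.2 := by
    refine (Measure.ae_prod_iff_ae_ae (measurableSet_eq_fun ?_ ?_)).2 hUv
    · exact hU.mul (by fun_prop)
    · fun_prop
  refine ⟨v, hv, ?_⟩
  filter_upwards [hUV,
    ae_comp_of_hom hUv' (fun p : X × X × X ↦ (p.1, p.2.2)) fun p ↦ ⟨(p.1, 1, p.2), rfl⟩,
    ae_comp_of_hom hUv' (fun p : X × X × X ↦ (p.1 * p.2.1, p.2.2))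
      fun p ↦ ⟨(p.1, 1, p.2), by simp⟩]
  rintro ⟨y, z, r⟩ hV hy hyz
  dsimp only at *
  rw [← eq_div_iff_mul_eq'] at hy hyz
  rw [← eq_div_iff_mul_eq''] at hV
  rw [hV, hy, hyz, mixedDiff_apply, div_div_div_eq, mul_right_comm, ← mul_assoc,
    mul_div_mul_right_eq_div, mul_comm (v (y * z * r))]

theorem exists_ae_eq_mixedDiff {W : X × X × X → Circle} {k : Circle} (hW : Measurable W)
    (hbase : ∀ᵐ p ∂μ.prod (μ.prod (μ.prod μ)), baseDiff W p = 1)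
    (hswap : ∀ᵐ p ∂μ.prod (μ.prod μ), swapDiff W p = k) :
    ∃ v : X → Circle, Measurable v ∧ ∀ᵐ p ∂μ.prod (μ.prod μ), W p = mixedDiff v p := by
  obtain ⟨x, hx, hx'⟩ :=
    ((Measure.ae_ae_of_ae_prod hbase).and (Measure.ae_ae_of_ae_prod hswap)).exists
  have htrans (g : X) : MeasurePreserving (fun p : X × X × X ↦ (g * p.1, p.2))
      (μ.prod (μ.prod μ)) (μ.prod (μ.prod μ)) :=
    (measurePreserving_mul_left μ g).prod (.id _)
  obtain ⟨v, hv, hWv⟩ := exists_ae_eq_mixedDiff_of_ratio (μ := μ) (U := fun y r ↦ W (x, y, r))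
    (V := fun p ↦ W (x * p.1, p.2)) (k := k) (by unfold Function.uncurry; fun_prop)
    (hx.mono fun p hp ↦ div_eq_one.1 hp) (hx'.mono fun p hp ↦ div_eq_iff_eq_mul.1 hp)
    (((htrans x).quasiMeasurePreserving.ae hswap).mono fun p hp ↦ div_eq_iff_eq_mul.1 hp)
  refine ⟨fun y ↦ v (x⁻¹ * y), by fun_prop, ?_⟩
  filter_upwards [(htrans x⁻¹).quasiMeasurePreserving.ae hWv] with p hp
  simpa [mixedDiff_apply, mul_assoc] using hp

end MixedDiff

section Straightening

set_option synthInstance.maxSize 512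

attribute [local instance] arrowMulDistribMulAction

theorem continuousConstSMul_arrow {ι K : Type*} [Group G] [MulAction G ι] [Monoid K]
    [TopologicalSpace K] : ContinuousConstSMul G (ι → K) :=
  ⟨fun g ↦ continuous_pi fun i ↦ continuous_apply (g⁻¹ • i)⟩

attribute [local instance] continuousConstSMul_arrow

variable {ι : Type*} [Countable ι] [Group G] [MulAction G ι] {μ : Measure (ι → Circle)}
  [IsProbabilityMeasure μ] [μ.IsHaarMeasure]

theorem exists_ae_eq_const_mul_mixedDiff (hι : ∀ i : ι, (MulAction.orbit G i).Infinite)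
    {W : (ι → Circle) × (ι → Circle) × (ι → Circle) → Circle} (hW : Measurable W) {l : G → Circle}
    (hbase : ∀ g : G, ∀ᵐ p ∂μ.prod (μ.prod (μ.prod μ)), baseDiff W (g • p) = l g * baseDiff W p)
    (hswap : ∀ g : G, ∀ᵐ p ∂μ.prod (μ.prod μ), swapDiff W (g • p) = swapDiff W p) :
    ∃ (κ : Circle) (v : (ι → Circle) → Circle), Measurable v ∧
      W =ᵐ[μ.prod (μ.prod μ)] (fun _ ↦ κ) * mixedDiff v := by
  obtain ⟨κ, hκ⟩ := ae_eq_const_of_comp_smul_eq_mul_prod hι μ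
    (measurable_baseDiff hW) hbase
  obtain ⟨k, hk⟩ := ae_eq_const_of_comp_smul_eq_mul_prod (l := fun _ : G ↦ 1) hι μ
    ((measurable_swapDiff hW).comp measurable_snd) fun g ↦ by
      simpa using Measure.quasiMeasurePreserving_snd.ae (hswap g)
  obtain ⟨v, hv, hWv⟩ := exists_ae_eq_mixedDiff (μ := μ) (W := W / fun _ ↦ κ) (k := k)
    (by fun_prop) (by simpa [map_div, baseDiff_const, div_eq_one] using hκ)
    (by simpa [map_div, swapDiff_const] using (Measure.ae_ae_of_ae_prod hk).exists.choose_spec)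
  exact ⟨κ, v, hv, hWv.mono fun p hp ↦ by simpa [div_eq_iff_eq_mul'] using hp⟩

theorem exists_mixedDiff_eq_one_of_isCocycleSuperrigid
    (hι : ∀ i : ι, (MulAction.orbit G i).Infinite)
    (hsuper : IsCocycleSuperrigid
      (fun (g : G) (p : (ι → Circle) × (ι → Circle) × (ι → Circle)) ↦ g • p) (μ.prod (μ.prod μ)))
    {b : G → (ι → Circle) → Circle} (hb : ∀ g, Measurable (b g))
    (hcoc : ∀ g h, ∀ᵐ p ∂μ.prod (μ.prod μ),
      mixedDiff (b (g * h)) p = mixedDiff (b g) p * mixedDiff (b h) (g⁻¹ • p)) :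
    ∃ v : (ι → Circle) → Circle, Measurable v ∧ ∀ g, ∀ᵐ p ∂μ.prod (μ.prod μ),
      mixedDiff (b g * v / fun x ↦ v (g⁻¹ • x)) p = 1 := by
  obtain ⟨l, W, hW, hbW⟩ := hsuper (fun g ↦ mixedDiff (b g))
    ⟨fun g ↦ measurable_mixedDiff (hb g), hcoc⟩
  replace hbW (g : G) : mixedDiff (b g) =ᵐ[μ.prod (μ.prod μ)]
      (fun _ ↦ l g) * ((fun p ↦ W (g⁻¹ • p)) / W) :=
    (hbW g).mono fun p hp ↦ by simpa [div_eq_mul_inv] using hp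
  obtain ⟨κ, v, hv, hWv⟩ := exists_ae_eq_const_mul_mixedDiff (μ := μ) (l := l) hι hW
    (fun g ↦ by
      filter_upwards [baseDiff_congr_ae (hbW g⁻¹)] with p hp
      simpa [map_div, baseDiff_mixedDiff, baseDiff_const, baseDiff_comp_smul,
        eq_comm (a := (1 : Circle)), inv_mul_eq_one, eq_div_iff_mul_eq',
        eq_comm (b := baseDiff W (g • p))] using hp)
    (fun g ↦ by
      filter_upwards [swapDiff_congr_ae (hbW g⁻¹)] with p hp
      simpa [map_div, swapDiff_mixedDiff, swapDiff_const, swapDiff_comp_smul,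
        eq_comm (a := (1 : Circle)), div_eq_one] using hp)
  have hbv (g : G) : mixedDiff (b g) =ᵐ[μ.prod (μ.prod μ)]
      (fun _ ↦ l g) * mixedDiff ((fun x ↦ v (g⁻¹ • x)) / v) := by
    filter_upwards [hbW g, hWv, ae_smul_of_ae hWv g⁻¹] with p h₁ h₂ h₃
    rw [h₁]
    simp [map_div, mixedDiff_comp_smul, h₂, h₃]
  refine ⟨v, hv, fun g ↦ ?_⟩
  have hl : l g = 1 := by
    obtain ⟨p, hp⟩ := (baseDiff_congr_ae (hbv g)).exists
    simpa [baseDiff_mixedDiff, baseDiff_const, eq_comm] using hp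
  filter_upwards [hbv g] with p hp
  simp only [map_mul, map_div, Pi.mul_apply, Pi.div_apply, hl] at hp ⊢
  simp [hp]

end Straightening

section Characters

attribute [local instance] arrowMulDistribMulAction continuousConstSMul_arrow

theorem torusChar_mapDomain_smul {ι : Type*} [Group G] [MulAction G ι] (n : ι →₀ ℤ) (g : G)
    (x : ι → Circle) : torusChar (n.mapDomain (g • ·)) x = torusChar n (g⁻¹ • x) := by
  rw [torusChar_mapDomain]
  exact congrArg _ (funext fun i ↦ congrArg (fun k ↦ x (k • i)) (inv_inv g).symm)

variable {ι : Type*} [Countable ι] [Group G] [MulAction G ι] {μ : Measure (ι → Circle)}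
  [IsProbabilityMeasure μ] [μ.IsHaarMeasure]

theorem exists_mapDomain_sub_add_of_ae (hι : ∀ i : ι, (MulAction.orbit G i).Infinite)
    (hsuper : IsCocycleSuperrigid
      (fun (g : G) (p : (ι → Circle) × (ι → Circle) × (ι → Circle)) ↦ g • p) (μ.prod (μ.prod μ)))
    {c : G → G → ι →₀ ℤ} {θ : G → G → Circle} {b : G → (ι → Circle) → Circle}
    (hb : ∀ g, Measurable (b g))
    (hc : ∀ g h, ∀ᵐ x ∂μ, torusChar (c g h) x =
      θ g h * (b h (g⁻¹ • x) * (b (g * h) x)⁻¹ * b g x)) :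
    ∃ n : G → ι →₀ ℤ, ∀ g h, c g h = (n h).mapDomain (g • ·) - n (g * h) + n g := by
  have hcoc (g h : G) : ∀ᵐ p ∂μ.prod (μ.prod μ),
      mixedDiff (b (g * h)) p = mixedDiff (b g) p * mixedDiff (b h) (g⁻¹ • p) := by
    have hgh : torusChar (c g h) =ᵐ[μ]
        (fun _ ↦ θ g h) * ((fun x ↦ b h (g⁻¹ • x)) * (b (g * h))⁻¹ * b g) := hc g h
    filter_upwards [mixedDiff_congr_ae hgh] with p hp
    have hp' :
        mixedDiff (b h) (g⁻¹ • p) * (mixedDiff (b (g * h)) p)⁻¹ * mixedDiff (b g) p = 1 := by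
      simpa [mixedDiff_monoidHom, mixedDiff_comp_smul, mixedDiff_const] using hp.symm
    rw [← mul_inv_eq_one.1 ((mul_right_comm _ _ _).trans hp'), mul_comm]
  obtain ⟨v, hv, hbv⟩ := exists_mixedDiff_eq_one_of_isCocycleSuperrigid hι hsuper hb hcoc
  have haff (g : G) : ∃ (r : Circle) (n : ι →₀ ℤ), ∀ᵐ x ∂μ,
      b g x * v x / v (g⁻¹ • x) = r * torusChar n x :=
    ae_eq_const_mul_torusChar μ (by fun_prop)
      ((Measure.ae_ae_of_ae_prod (hbv g)).mono fun x hx ↦ (Measure.ae_ae_of_ae_prod hx).mono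
        fun y hy ↦ hy.mono fun r hr ↦ div_eq_one.1 hr)
  choose r n hn using haff
  refine ⟨n, fun g h ↦ eq_of_ae_torusChar_eq_const_mul (μ := μ)
    (c := θ g h * (r h * (r (g * h))⁻¹ * r g)) ?_⟩
  filter_upwards [hc g h, hn g, hn (g * h), ae_smul_of_ae (hn h) g⁻¹] with x hx hg hgh hh
  rw [div_eq_iff_eq_mul, ← eq_div_iff_mul_eq'] at hg hgh hh
  rw [hx, hg, hgh, hh, torusChar_add, torusChar_sub, torusChar_mapDomain_smul,
    mul_inv_rev, mul_smul]
  ext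
  simp only [Circle.coe_mul, Circle.coe_div, Circle.coe_inv]
  field_simp

end Characters

theorem H2_ofMulAction_eq_zero {G ι : Type} [Group G] [MulAction G ι]
    (h : ∀ c : G → G → ι →₀ ℤ,
      (∀ g h j, c (g * h) j + c g h = (c h j).mapDomain (g • ·) + c g (h * j)) →
      ∃ n : G → ι →₀ ℤ, ∀ g h, c g h = (n h).mapDomain (g • ·) - n (g * h) + n g)
    (x : groupCohomology.H2 (Rep.ofMulAction ℤ G ι)) : x = 0 := by
  induction x using groupCohomology.H2_induction_on with
  | h f =>
    have hf := (groupCohomology.mem_cocycles₂_iff (A := Rep.ofMulAction ℤ G ι) f).1 f.2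
    obtain ⟨n, hn⟩ := h (fun g h ↦ (f (g, h)).coeff)
      fun g h j ↦ congrArg MonoidAlgebra.coeff (hf g h j)
    exact (groupCohomology.H2π_eq_zero_iff _).2 ⟨fun g ↦ .ofCoeff (n g),
      funext fun p ↦ MonoidAlgebra.coeff_injective (hn p.1 p.2).symm⟩

section Main

attribute [local instance] arrowMulDistribMulAction continuousConstSMul_arrow

theorem torusChar_mem_measZ2 {ι : Type*} [Countable ι] [Group G] [MulAction G ι]
    (μ : Measure (ι → Circle)) {c : G → G → ι →₀ ℤ}
    (hc : ∀ g h j, c (g * h) j + c g h = (c h j).mapDomain (g • ·) + c g (h * j)) :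
    (fun g h ↦ ⇑(torusChar (c g h))) ∈ measZ2 (fun (g : G) (x : ι → Circle) ↦ g • x) μ := by
  refine ⟨fun g h ↦ by fun_prop, fun g h j ↦ .of_forall fun x ↦ ?_⟩
  have hx := congrArg (torusChar · x) (hc g h j)
  simp only [torusChar_add, torusChar_mapDomain_smul] at hx
  beta_reduce
  rw [mul_inv_eq_one, mul_right_comm, mul_inv_eq_iff_eq_mul, ← hx, mul_comm]

theorem h2_zg_trivial_of_psi2_surjective_general {G ι : Type} [Group G] [Countable ι]
    [MulAction G ι] (hι : ∀ i : ι, (MulAction.orbit G i).Infinite)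
    (μ : Measure (ι → Circle)) [IsProbabilityMeasure μ] [μ.IsHaarMeasure]
    (hsuper : IsCocycleSuperrigid
      (fun (g : G) (p : (ι → Circle) × (ι → Circle) × (ι → Circle)) ↦ g • p) (μ.prod (μ.prod μ)))
    (hsurj : ∀ c : G → G → (ι → Circle) → Circle, c ∈ measZ2 (fun (g : G) x ↦ g • x) μ →
      c ∈ measBPsi2 (fun (g : G) x ↦ g • x) μ)
    (x : groupCohomology.H2 (Rep.ofMulAction ℤ G ι)) : x = 0 := by
  refine H2_ofMulAction_eq_zero (fun c hc ↦ ?_) x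
  obtain ⟨θ, b, -, hb, hcob⟩ := hsurj _ (torusChar_mem_measZ2 μ hc)
  exact exists_mapDomain_sub_add_of_ae hι hsuper hb hcob

end Main

/-- Let `G ∈ 𝒢` be countable infinite and consider the Bernoulli
shift `G ↷ (𝕋^G, ν^G)` where `ν` is the Haar probability measure on `𝕋`.  If the
natural map `Ψ₂ : H²(G, 𝕋) → H²(G ↷ 𝕋^G; 𝕋)` is surjective — i.e. every measurable
2-cocycle is cohomologous to a constant-in-`x` group 2-cocycle — then `H²(G, ℤG) = 0`. -/
theorem h2_zg_trivial_of_psi2_surjective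
    (G : Type) [Group G] [Countable G] [Infinite G] (hG : InClassG G)
    (ν : Measure Circle) [IsProbabilityMeasure ν] [ν.IsHaarMeasure]
    (μ : Measure (G → Circle)) [IsProbabilityMeasure μ] (hμ : IsBernoulliMeasure ν μ)
    (hsurj : ∀ c : G → G → (G → Circle) → Circle,
      c ∈ measZ2 (bernoulliShift G Circle) μ → c ∈ measBPsi2 (bernoulliShift G Circle) μ) :
    ∀ x : groupCohomology.H2 (Rep.ofMulAction ℤ G G), x = 0 := by
  have := hμ.isHaarMeasure
  exact h2_zg_trivial_of_psi2_surjective_general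
    (fun i ↦ by simpa [MulAction.orbit_eq_univ] using Set.infinite_univ) μ
    (hG.isCocycleSuperrigid_prod μ) hsurj

end AlgActCohomology
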